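/- Let SC₂ be the second-order comprehension schema and SC₁ = { F* : F ∈ SC₂ } its first-order encoding. Then every formula in the decoded set (SC₁)ᵒ is intuitionistically second-order provably equivalent to a formula of SC₂, and conversely; in particular every formula of (SC₁)ᵒ is provable in second-order intuitionistic logic. -/

import Mathlib

namespace SOL

/-! ### Syntax: terms, first-order formulas, second-order formulas -/

/-- First-order terms over a set `F` of function/constant symbols. -/
inductive Tm (F : Type) : Type
  | var : ℕ → Tm F
  | func : F → List (Tm F) → Tm F

mutual
/-- Free variables of a term. -/
def fvT {F : Type} : Tm F → Finset ℕ
  | .var x => {x}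
  | .func _ ts => fvTs ts
def fvTs {F : Type} : List (Tm F) → Finset ℕ
  | [] => ∅
  | t :: ts => fvT t ∪ fvTs ts
end

mutual
/-- Simultaneous substitution in a term. -/
def substT {F : Type} (σ : ℕ → Tm F) : Tm F → Tm F
  | .var x => σ x
  | .func f ts => .func f (substTs σ ts)
def substTs {F : Type} (σ : ℕ → Tm F) : List (Tm F) → List (Tm F)
  | [] => []
  | t :: ts => substT σ t :: substTs σ ts
end

/-- A variable fresh for the finite set `s`. -/
def fresh (s : Finset ℕ) : ℕ := s.sup id + 1

/-- The variables occurring in the `σ`-images of members of `s`. -/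
def sImg {F : Type} (σ : ℕ → Tm F) (s : Finset ℕ) : Finset ℕ :=
  s.biUnion fun z => fvT (σ z)

/-- First-order formulas over function symbols `F` and relation symbols `R`. -/
inductive Fm1 (F R : Type) : Type
  | bot
  | rel (r : R) (ts : List (Tm F))
  | imp (A B : Fm1 F R)
  | conj (A B : Fm1 F R)
  | disj (A B : Fm1 F R)
  | all (x : ℕ) (A : Fm1 F R)
  | ex (x : ℕ) (A : Fm1 F R)

/-- Free (first-order) variables of a first-order formula. -/
def fv1 {F R : Type} : Fm1 F R → Finset ℕ
  | .bot => ∅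
  | .rel _ ts => fvTs ts
  | .imp A B => fv1 A ∪ fv1 B
  | .conj A B => fv1 A ∪ fv1 B
  | .disj A B => fv1 A ∪ fv1 B
  | .all x A => (fv1 A).erase x
  | .ex x A => (fv1 A).erase x

/-- Capture-avoiding simultaneous substitution in a first-order formula
(bound variables are renamed to fresh ones). -/
def subst1 {F R : Type} : (ℕ → Tm F) → Fm1 F R → Fm1 F R
  | σ, .bot => .bot
  | σ, .rel r ts => .rel r (substTs σ ts)
  | σ, .imp A B => .imp (subst1 σ A) (subst1 σ B)
  | σ, .conj A B => .conj (subst1 σ A) (subst1 σ B)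
  | σ, .disj A B => .disj (subst1 σ A) (subst1 σ B)
  | σ, .all x A =>
      let y := fresh (sImg σ (fv1 A))
      .all y (subst1 (Function.update σ x (.var y)) A)
  | σ, .ex x A =>
      let y := fresh (sImg σ (fv1 A))
      .ex y (subst1 (Function.update σ x (.var y)) A)

/-- Second-order formulas over function symbols `F`.  `rel n X ts` is the
atomic formula `Xⁿ(ts)` where `X` is the name of a second-order variable of
arity `n`. `all1/ex1` are first-order quantifiers, `all2 n X` and `ex2 n X`
quantify over the second-order variable `Xⁿ`. -/
inductive Fm2 (F : Type) : Type
  | bot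
  | rel (n X : ℕ) (ts : List (Tm F))
  | imp (A B : Fm2 F)
  | conj (A B : Fm2 F)
  | disj (A B : Fm2 F)
  | all1 (x : ℕ) (A : Fm2 F)
  | ex1 (x : ℕ) (A : Fm2 F)
  | all2 (n X : ℕ) (A : Fm2 F)
  | ex2 (n X : ℕ) (A : Fm2 F)

/-- Free first-order variables of a second-order formula. -/
def fvo {F : Type} : Fm2 F → Finset ℕ
  | .bot => ∅
  | .rel _ _ ts => fvTs ts
  | .imp A B => fvo A ∪ fvo B
  | .conj A B => fvo A ∪ fvo B
  | .disj A B => fvo A ∪ fvo B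
  | .all1 x A => (fvo A).erase x
  | .ex1 x A => (fvo A).erase x
  | .all2 _ _ A => fvo A
  | .ex2 _ _ A => fvo A

/-- Free second-order variables (as pairs (arity, name)). -/
def fvs {F : Type} : Fm2 F → Finset (ℕ × ℕ)
  | .bot => ∅
  | .rel n X _ => {(n, X)}
  | .imp A B => fvs A ∪ fvs B
  | .conj A B => fvs A ∪ fvs B
  | .disj A B => fvs A ∪ fvs B
  | .all1 _ A => fvs A
  | .ex1 _ A => fvs A
  | .all2 n X A => (fvs A).erase (n, X)
  | .ex2 n X A => (fvs A).erase (n, X)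

/-- Update an arity-indexed family at one point. -/
def upd2 {α : Type*} (σ : ℕ → ℕ → α) (n X : ℕ) (v : α) : ℕ → ℕ → α :=
  fun m Y => if m = n ∧ Y = X then v else σ m Y

/-- The identity renaming of second-order variables. -/
def ρid : ℕ → ℕ → ℕ := fun _ Y => Y

/-- Capture-avoiding simultaneous first-order substitution `σ` combined with a
simultaneous renaming `ρ` of second-order variables, on second-order formulas. -/
def rnSub {F : Type} : (ℕ → Tm F) → (ℕ → ℕ → ℕ) → Fm2 F → Fm2 F
  | σ, _, .bot => .bot
  | σ, ρ, .rel n X ts => .rel n (ρ n X) (substTs σ ts)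
  | σ, ρ, .imp A B => .imp (rnSub σ ρ A) (rnSub σ ρ B)
  | σ, ρ, .conj A B => .conj (rnSub σ ρ A) (rnSub σ ρ B)
  | σ, ρ, .disj A B => .disj (rnSub σ ρ A) (rnSub σ ρ B)
  | σ, ρ, .all1 x A =>
      let y := fresh (sImg σ (fvo A))
      .all1 y (rnSub (Function.update σ x (.var y)) ρ A)
  | σ, ρ, .ex1 x A =>
      let y := fresh (sImg σ (fvo A))
      .ex1 y (rnSub (Function.update σ x (.var y)) ρ A)
  | σ, ρ, .all2 n X A =>
      let Y := fresh ((fvs A).image fun p => ρ p.1 p.2)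
      .all2 n Y (rnSub σ (upd2 ρ n X Y) A)
  | σ, ρ, .ex2 n X A =>
      let Y := fresh ((fvs A).image fun p => ρ p.1 p.2)
      .ex2 n Y (rnSub σ (upd2 ρ n X Y) A)

/-- The simultaneous substitution sending the parameters `ps` to the terms `ts`
(pointwise) and every other variable to itself. -/
def mkσ {F : Type} (ps : List ℕ) (ts : List (Tm F)) : ℕ → Tm F :=
  fun z => (List.lookup z (ps.zip ts)).getD (.var z)

/-- Capture-avoiding substitution of the comprehension "term" `λ ps. G` for the
second-order variable `Xⁿ` (combined with an auxiliary first-order substitution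
`σ` and second-order renaming `ρ`). -/
def cSub {F : Type} (n X : ℕ) (ps : List ℕ) (G : Fm2 F) :
    (ℕ → Tm F) → (ℕ → ℕ → ℕ) → Fm2 F → Fm2 F
  | σ, ρ, .bot => .bot
  | σ, ρ, .rel m Y ts =>
      if m = n ∧ Y = X then rnSub (mkσ ps (substTs σ ts)) ρid G
      else .rel m (ρ m Y) (substTs σ ts)
  | σ, ρ, .imp A B => .imp (cSub n X ps G σ ρ A) (cSub n X ps G σ ρ B)
  | σ, ρ, .conj A B => .conj (cSub n X ps G σ ρ A) (cSub n X ps G σ ρ B)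
  | σ, ρ, .disj A B => .disj (cSub n X ps G σ ρ A) (cSub n X ps G σ ρ B)
  | σ, ρ, .all1 x A =>
      let y := fresh (sImg σ (fvo A) ∪ fvo G)
      .all1 y (cSub n X ps G (Function.update σ x (.var y)) ρ A)
  | σ, ρ, .ex1 x A =>
      let y := fresh (sImg σ (fvo A) ∪ fvo G)
      .ex1 y (cSub n X ps G (Function.update σ x (.var y)) ρ A)
  | σ, ρ, .all2 m Y A =>
      let Y' := fresh (((fvs A).image fun p => ρ p.1 p.2) ∪ (fvs G).image Prod.snd)
      if m = n ∧ Y = X then .all2 m Y' (rnSub σ (upd2 ρ m Y Y') A)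
      else .all2 m Y' (cSub n X ps G σ (upd2 ρ m Y Y') A)
  | σ, ρ, .ex2 m Y A =>
      let Y' := fresh (((fvs A).image fun p => ρ p.1 p.2) ∪ (fvs G).image Prod.snd)
      if m = n ∧ Y = X then .ex2 m Y' (rnSub σ (upd2 ρ m Y Y') A)
      else .ex2 m Y' (cSub n X ps G σ (upd2 ρ m Y Y') A)

/-- Renaming of first-order variables in a second-order formula. -/
def rename1 {F : Type} (r : ℕ → ℕ) : Fm2 F → Fm2 F :=
  rnSub (fun z => .var (r z)) ρid

/-- Renaming the second-order variable `Xⁿ` to `Yⁿ`. -/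
def rename2 {F : Type} (n X Y : ℕ) : Fm2 F → Fm2 F :=
  rnSub Tm.var (upd2 ρid n X Y)

/-- Substitution of a single term for a first-order variable, `A[x := t]`. -/
def substO {F : Type} (x : ℕ) (t : Tm F) : Fm2 F → Fm2 F :=
  rnSub (Function.update Tm.var x t) ρid

/-- Second-order substitution `A[Xⁿ := λ ps. G]`. -/
def substS {F : Type} (n X : ℕ) (ps : List ℕ) (G : Fm2 F) : Fm2 F → Fm2 F :=
  cSub n X ps G Tm.var ρid

/-- `A ↔ B` in the second-order language. -/
def iff2 {F : Type} (A B : Fm2 F) : Fm2 F := .conj (.imp A B) (.imp B A)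

/-! ### Natural deduction -/

/-- Natural deduction for first-order logic; the `Bool` flag is `false` for
intuitionistic, `true` for classical logic (which adds reductio ad absurdum). -/
inductive Prf1 {F R : Type} : Bool → List (Fm1 F R) → Fm1 F R → Prop
  | ax {k Γ A} : A ∈ Γ → Prf1 k Γ A
  | botE {k Γ A} : Prf1 k Γ .bot → Prf1 k Γ A
  | raa {Γ A} : Prf1 true (.imp A .bot :: Γ) .bot → Prf1 true Γ A
  | impI {k Γ A B} : Prf1 k (A :: Γ) B → Prf1 k Γ (.imp A B)
  | impE {k Γ A B} : Prf1 k Γ (.imp A B) → Prf1 k Γ A → Prf1 k Γ B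
  | conjI {k Γ A B} : Prf1 k Γ A → Prf1 k Γ B → Prf1 k Γ (.conj A B)
  | conjE1 {k Γ A B} : Prf1 k Γ (.conj A B) → Prf1 k Γ A
  | conjE2 {k Γ A B} : Prf1 k Γ (.conj A B) → Prf1 k Γ B
  | disjI1 {k Γ A B} : Prf1 k Γ A → Prf1 k Γ (.disj A B)
  | disjI2 {k Γ A B} : Prf1 k Γ B → Prf1 k Γ (.disj A B)
  | disjE {k Γ A B C} : Prf1 k Γ (.disj A B) → Prf1 k (A :: Γ) C → Prf1 k (B :: Γ) C →
      Prf1 k Γ C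
  | allI {k Γ x A} : Prf1 k Γ A → (∀ B ∈ Γ, x ∉ fv1 B) → Prf1 k Γ (.all x A)
  | allE {k Γ x A} (t : Tm F) : Prf1 k Γ (.all x A) →
      Prf1 k Γ (subst1 (Function.update Tm.var x t) A)
  | exI {k Γ x A} (t : Tm F) : Prf1 k Γ (subst1 (Function.update Tm.var x t) A) →
      Prf1 k Γ (.ex x A)
  | exE {k Γ x A C} : Prf1 k Γ (.ex x A) → Prf1 k (A :: Γ) C →
      x ∉ fv1 C → (∀ B ∈ Γ, x ∉ fv1 B) → Prf1 k Γ C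

/-- Natural deduction for second-order logic (`false` = intuitionistic,
`true` = classical), with impredicative comprehension built into the
second-order quantifier rules. -/
inductive Prf2 {F : Type} : Bool → List (Fm2 F) → Fm2 F → Prop
  | ax {k Γ A} : A ∈ Γ → Prf2 k Γ A
  | botE {k Γ A} : Prf2 k Γ .bot → Prf2 k Γ A
  | raa {Γ A} : Prf2 true (.imp A .bot :: Γ) .bot → Prf2 true Γ A
  | impI {k Γ A B} : Prf2 k (A :: Γ) B → Prf2 k Γ (.imp A B)
  | impE {k Γ A B} : Prf2 k Γ (.imp A B) → Prf2 k Γ A → Prf2 k Γ B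
  | conjI {k Γ A B} : Prf2 k Γ A → Prf2 k Γ B → Prf2 k Γ (.conj A B)
  | conjE1 {k Γ A B} : Prf2 k Γ (.conj A B) → Prf2 k Γ A
  | conjE2 {k Γ A B} : Prf2 k Γ (.conj A B) → Prf2 k Γ B
  | disjI1 {k Γ A B} : Prf2 k Γ A → Prf2 k Γ (.disj A B)
  | disjI2 {k Γ A B} : Prf2 k Γ B → Prf2 k Γ (.disj A B)
  | disjE {k Γ A B C} : Prf2 k Γ (.disj A B) → Prf2 k (A :: Γ) C → Prf2 k (B :: Γ) C →
      Prf2 k Γ C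
  | all1I {k Γ x A} : Prf2 k Γ A → (∀ B ∈ Γ, x ∉ fvo B) → Prf2 k Γ (.all1 x A)
  | all1E {k Γ x A} (t : Tm F) : Prf2 k Γ (.all1 x A) → Prf2 k Γ (substO x t A)
  | ex1I {k Γ x A} (t : Tm F) : Prf2 k Γ (substO x t A) → Prf2 k Γ (.ex1 x A)
  | ex1E {k Γ x A C} : Prf2 k Γ (.ex1 x A) → Prf2 k (A :: Γ) C →
      x ∉ fvo C → (∀ B ∈ Γ, x ∉ fvo B) → Prf2 k Γ C
  | all2I {k Γ n X A} : Prf2 k Γ A → (∀ B ∈ Γ, (n, X) ∉ fvs B) → Prf2 k Γ (.all2 n X A)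
  | all2E {k Γ n X A} (ps : List ℕ) (G : Fm2 F) : ps.length = n → ps.Nodup →
      Prf2 k Γ (.all2 n X A) → Prf2 k Γ (substS n X ps G A)
  | ex2I {k Γ n X A} (ps : List ℕ) (G : Fm2 F) : ps.length = n → ps.Nodup →
      Prf2 k Γ (substS n X ps G A) → Prf2 k Γ (.ex2 n X A)
  | ex2E {k Γ n X A C} : Prf2 k Γ (.ex2 n X A) → Prf2 k (A :: Γ) C →
      (n, X) ∉ fvs C → (∀ B ∈ Γ, (n, X) ∉ fvs B) → Prf2 k Γ C

/-- Provability from a (possibly infinite) set of hypotheses. -/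
def PrfTh1 {F R : Type} (k : Bool) (T : Set (Fm1 F R)) (A : Fm1 F R) : Prop :=
  ∃ Γ : List (Fm1 F R), (∀ B ∈ Γ, B ∈ T) ∧ Prf1 k Γ A

def PrfTh2 {F : Type} (k : Bool) (T : Set (Fm2 F)) (A : Fm2 F) : Prop :=
  ∃ Γ : List (Fm2 F), (∀ B ∈ Γ, B ∈ T) ∧ Prf2 k Γ A

/-! ### The coding `*` and the reverse coding `ᵒ` -/

/-- A measure of second-order formulas invariant under renaming substitutions. -/
def sz {F : Type} : Fm2 F → ℕ
  | .bot => 1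
  | .rel _ _ _ => 1
  | .imp A B => sz A + sz B + 1
  | .conj A B => sz A + sz B + 1
  | .disj A B => sz A + sz B + 1
  | .all1 _ A => sz A + 1
  | .ex1 _ A => sz A + 1
  | .all2 _ _ A => sz A + 1
  | .ex2 _ _ A => sz A + 1

theorem sz_rnSub {F : Type} (σ : ℕ → Tm F) (ρ : ℕ → ℕ → ℕ) (A : Fm2 F) :
    sz (rnSub σ ρ A) = sz A := by
  induction A generalizing σ ρ <;> simp [rnSub, sz, *]

/-- All first-order variables relevant to the encoding of `A`: the free
first-order variables together with the `φ`-images of the free second-order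
variables. -/
def starFv {F : Type} (φ : ℕ → ℕ → ℕ) (A : Fm2 F) : Finset ℕ :=
  fvo A ∪ (fvs A).image fun p => φ p.1 p.2

/-- The encoding `A ↦ A*` of second-order formulas into the first-order
language with the application predicates `Apₙ` (here: the relation symbol `n`
applied to `n+1` terms).  `φ n` is a bijection from second-order variables
of arity `n` to first-order variables, with inverse `ψ n`. -/
def star {F : Type} (φ ψ : ℕ → ℕ → ℕ) : Fm2 F → Fm1 F ℕ
  | .bot => .bot
  | .rel n X ts => .rel n (.var (φ n X) :: ts)
  | .imp A B => .imp (star φ ψ A) (star φ ψ B)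
  | .conj A B => .conj (star φ ψ A) (star φ ψ B)
  | .disj A B => .disj (star φ ψ A) (star φ ψ B)
  | .all1 x A =>
      let y := fresh (starFv φ A)
      .all y (star φ ψ (rename1 (Function.update id x y) A))
  | .ex1 x A =>
      let y := fresh (starFv φ A)
      .ex y (star φ ψ (rename1 (Function.update id x y) A))
  | .all2 n X A =>
      let y := fresh (starFv φ A)
      .all y (star φ ψ (rename2 n X (ψ n y) A))
  | .ex2 n X A =>
      let y := fresh (starFv φ A)
      .ex y (star φ ψ (rename2 n X (ψ n y) A))
termination_by A => sz A
decreasing_by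
  all_goals simp only [rename1, rename2, sz_rnSub, sz] <;> omega

/-- The (sorted) list of arities `n` such that the second-order variable
`ψ n x` (i.e. the one mapped to `x` by `φ`) occurs free in `B`. -/
def arities {F : Type} (φ : ℕ → ℕ → ℕ) (x : ℕ) (B : Fm2 F) : List ℕ :=
  (((fvs B).filter fun p => φ p.1 p.2 = x).image Prod.fst).sort (· ≤ ·)

/-- The reverse coding `F ↦ Fᵒ` from the first-order language with the
application predicates back to second-order logic. -/
def rev {F : Type} (φ ψ : ℕ → ℕ → ℕ) : Fm1 F ℕ → Fm2 F
  | .bot => .bot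
  | .rel n ts =>
      match ts with
      | .var x :: ts' => .rel n (ψ n x) ts'
      | _ => .bot
  | .imp A B => .imp (rev φ ψ A) (rev φ ψ B)
  | .conj A B => .conj (rev φ ψ A) (rev φ ψ B)
  | .disj A B => .disj (rev φ ψ A) (rev φ ψ B)
  | .all x A =>
      let B := rev φ ψ A
      .all1 x ((arities φ x B).foldr (fun n C => .all2 n (ψ n x) C) B)
  | .ex x A =>
      let B := rev φ ψ A
      .ex1 x ((arities φ x B).foldr (fun n C => .ex2 n (ψ n x) C) B)

/-- `φ` and `ψ` are inverse families of bijections between second-order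
variables of each arity and first-order variables. -/
def InvPair (φ ψ : ℕ → ℕ → ℕ) : Prop :=
  ∀ n, Function.LeftInverse (ψ n) (φ n) ∧ Function.RightInverse (ψ n) (φ n)

/-! ### Comprehension schemas -/

/-- An instance of the second-order comprehension schema:
`∀χ₁…∀χₘ ∃Xⁿ ∀x₁…∀xₙ (G ↔ Xⁿ(x₁,…,xₙ))`, where the `χᵢ` may be first- or
second-order variables. -/
def scInstance {F : Type} (n X : ℕ) (xs : List ℕ) (chis : List (ℕ ⊕ (ℕ × ℕ)))
    (G : Fm2 F) : Fm2 F :=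
  chis.foldr
    (fun c B => match c with
      | .inl x => .all1 x B
      | .inr (m, Y) => .all2 m Y B)
    (.ex2 n X (xs.foldr (fun x B => .all1 x B)
      (iff2 G (.rel n X (xs.map Tm.var)))))

/-- The second-order comprehension schema `SC₂` (a set of closed formulas). -/
def SC2 {F : Type} : Set (Fm2 F) :=
  { A | ∃ (n X : ℕ) (xs : List ℕ) (chis : List (ℕ ⊕ (ℕ × ℕ))) (G : Fm2 F),
      xs.length = n ∧ xs.Nodup ∧
      (n, X) ∉ fvs G ∧
      fvo G ⊆ xs.toFinset ∪ (chis.filterMap Sum.getLeft?).toFinset ∧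
      fvs G ⊆ (chis.filterMap Sum.getRight?).toFinset ∧
      A = scInstance n X xs chis G }

/-- The first-order comprehension schema `SC₁ = (SC₂)*`. -/
def SC1 {F : Type} (φ ψ : ℕ → ℕ → ℕ) : Set (Fm1 F ℕ) :=
  star φ ψ '' SC2

end SOL

/-
A decoded code of an instance of comprehension is, up to the names of its variables, again an
instance of comprehension, preceded by some vacuous quantifiers, so everything reduces to proving
such instances. The rule `ex2I`, with `G` itself as the witness for `Xⁿ`, leaves a formula
`G' ↔ G''` between two capture-avoiding renamings of `G`, so that α-equivalent formulas have to be
interderivable.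

The substitutions rename every bound variable. Substituting an arbitrary formula for a propositional
variable that does not occur in `A` turns `A` into its renaming `freshen S e A` with `e` the
identity and `S` the free variables of the substituted formula; by the rules for a vacuous
second-order quantifier the two are interderivable. If two formulas differ only in the name of one
binder, their renamings coincide as soon as `S` contains a name above both, and chains of such steps
join any two α-equivalent formulas.
-/

namespace SOL

variable {F : Type}

/-! ### Terms -/

mutual
theorem substT_congr {σ τ : ℕ → Tm F} :
    ∀ t : Tm F, (∀ x ∈ fvT t, σ x = τ x) → substT σ t = substT τ t
  | .var x, h => h x (by simp only [fvT, Finset.mem_singleton])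
  | .func f ts, h => congrArg (Tm.func f) (substTs_congr ts h)
theorem substTs_congr {σ τ : ℕ → Tm F} :
    ∀ ts : List (Tm F), (∀ x ∈ fvTs ts, σ x = τ x) → substTs σ ts = substTs τ ts
  | [], _ => rfl
  | t :: ts, h => congrArg₂ List.cons
      (substT_congr t fun x hx => h x (Finset.mem_union_left _ hx))
      (substTs_congr ts fun x hx => h x (Finset.mem_union_right _ hx))
end

mutual
theorem substT_substT (σ τ : ℕ → Tm F) :
    ∀ t : Tm F, substT σ (substT τ t) = substT (fun x => substT σ (τ x)) t
  | .var _ => rfl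
  | .func f ts => congrArg (Tm.func f) (substTs_substTs σ τ ts)
theorem substTs_substTs (σ τ : ℕ → Tm F) :
    ∀ ts : List (Tm F), substTs σ (substTs τ ts) = substTs (fun x => substT σ (τ x)) ts
  | [] => rfl
  | t :: ts => congrArg₂ List.cons (substT_substT σ τ t) (substTs_substTs σ τ ts)
end

mutual
theorem substT_var : ∀ t : Tm F, substT Tm.var t = t
  | .var _ => rfl
  | .func f ts => congrArg (Tm.func f) (substTs_var ts)
theorem substTs_var : ∀ ts : List (Tm F), substTs Tm.var ts = ts
  | [] => rfl
  | t :: ts => congrArg₂ List.cons (substT_var t) (substTs_var ts)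
end

mutual
theorem fvT_substT_var (σ : ℕ → ℕ) :
    ∀ t : Tm F, fvT (substT (fun x => .var (σ x)) t) = (fvT t).image σ
  | .var x => (Finset.image_singleton σ x).symm
  | .func _ ts => fvTs_substTs_var σ ts
theorem fvTs_substTs_var (σ : ℕ → ℕ) :
    ∀ ts : List (Tm F), fvTs (substTs (fun x => .var (σ x)) ts) = (fvTs ts).image σ
  | [] => rfl
  | t :: ts => by
      simp only [substTs, fvTs, fvT_substT_var σ t, fvTs_substTs_var σ ts, Finset.image_union]
end

theorem fvTs_map_var (xs : List ℕ) : fvTs (xs.map (Tm.var : ℕ → Tm F)) = xs.toFinset := by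
  induction xs with
  | nil => rfl
  | cons x xs ih => simp [fvTs, fvT, ih]

theorem substTs_map_var (σ : ℕ → Tm F) (xs : List ℕ) :
    substTs σ (xs.map Tm.var) = xs.map σ := by
  induction xs with
  | nil => rfl
  | cons x xs ih => simp [substTs, substT, ih]

theorem sImg_var (σ : ℕ → ℕ) (s : Finset ℕ) :
    sImg (fun x => (Tm.var (σ x) : Tm F)) s = s.image σ := by
  ext y; simp [sImg, fvT, eq_comm]

theorem mkσ_map (ps : List ℕ) (σ : ℕ → Tm F) (z : ℕ) :
    mkσ ps (ps.map σ) z = if z ∈ ps then σ z else .var z := by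
  induction ps with
  | nil => rfl
  | cons p ps ih =>
    obtain rfl | hz := eq_or_ne z p
    · simp [mkσ]
    · have hb : (z == p) = false := by simp [hz]
      simpa [mkσ, List.lookup_cons, hb, hz] using ih

theorem lt_fresh {s : Finset ℕ} {x : ℕ} (h : x ∈ s) : x < fresh s :=
  Nat.lt_succ_of_le (Finset.le_sup (f := id) h)

theorem fresh_notMem (s : Finset ℕ) : fresh s ∉ s := fun h => (lt_fresh h).false

theorem update_var (σ : ℕ → ℕ) (x y : ℕ) :
    Function.update (fun z => (Tm.var (σ z) : Tm F)) x (.var y) =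
      fun z => .var (Function.update σ x y z) :=
  (Function.comp_update Tm.var σ x y).symm

/-! ### Connectives, quantifiers and variables -/

/-- The binary connectives, so that `imp`, `conj` and `disj` can be treated alike. -/
inductive Connective
  | imp | conj | disj

/-- The two quantifiers, regardless of the sort of the variable they bind. -/
inductive Quantifier
  | all | ex

/-- Variables of both sorts: `(none, x)` is the first-order variable `x`, and `(some n, X)` is
the second-order variable `Xⁿ`. -/
abbrev Var := Option ℕ × ℕ

/-- The compound formula with the given binary connective. -/
def conn : Connective → Fm2 F → Fm2 F → Fm2 F
  | .imp => .imp
  | .conj => .conj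
  | .disj => .disj

/-- The formula quantifying over the variable `(k, x)` of either sort. -/
def quant : Quantifier → Option ℕ → ℕ → Fm2 F → Fm2 F
  | .all, none => .all1
  | .ex, none => .ex1
  | .all, some n => .all2 n
  | .ex, some n => .ex2 n

/-- Recursion on formulas that treats the connectives, and the quantifiers of both sorts,
uniformly. -/
def Fm2.uniformRec {α : Type} (bot : α) (rel : ℕ → ℕ → List (Tm F) → α)
    (conn : Connective → α → α → α) (quant : Quantifier → Option ℕ → ℕ → Fm2 F → α → α) :
    Fm2 F → α
  | .bot => bot
  | .rel n X ts => rel n X ts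
  | .imp A B => conn .imp (A.uniformRec bot rel conn quant) (B.uniformRec bot rel conn quant)
  | .conj A B => conn .conj (A.uniformRec bot rel conn quant) (B.uniformRec bot rel conn quant)
  | .disj A B => conn .disj (A.uniformRec bot rel conn quant) (B.uniformRec bot rel conn quant)
  | .all1 x A => quant .all none x A (A.uniformRec bot rel conn quant)
  | .ex1 x A => quant .ex none x A (A.uniformRec bot rel conn quant)
  | .all2 n X A => quant .all (some n) X A (A.uniformRec bot rel conn quant)
  | .ex2 n X A => quant .ex (some n) X A (A.uniformRec bot rel conn quant)

theorem Fm2.uniformInduction {motive : Fm2 F → Prop} (bot : motive .bot)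
    (rel : ∀ n X ts, motive (.rel n X ts))
    (conn : ∀ c A B, motive A → motive B → motive (conn c A B))
    (quant : ∀ q k x A, motive A → motive (quant q k x A)) (A : Fm2 F) : motive A := by
  induction A with
  | bot => exact bot
  | rel n X ts => exact rel n X ts
  | imp A B hA hB => exact conn .imp A B hA hB
  | conj A B hA hB => exact conn .conj A B hA hB
  | disj A B hA hB => exact conn .disj A B hA hB
  | all1 x A hA => exact quant .all none x A hA
  | ex1 x A hA => exact quant .ex none x A hA
  | all2 n X A hA => exact quant .all (some n) X A hA
  | ex2 n X A hA => exact quant .ex (some n) X A hA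

/-- The free variables of a formula, of both sorts. -/
def fv (A : Fm2 F) : Finset Var :=
  (fvo A).image (none, ·) ∪ (fvs A).image fun p => (some p.1, p.2)

@[simp]
theorem none_mem_fv {A : Fm2 F} {x : ℕ} : (none, x) ∈ fv A ↔ x ∈ fvo A := by
  simp [fv]

@[simp]
theorem some_mem_fv {A : Fm2 F} {n X : ℕ} : (some n, X) ∈ fv A ↔ (n, X) ∈ fvs A := by
  simp [fv]

theorem fv_conn (c : Connective) (A B : Fm2 F) : fv (conn c A B) = fv A ∪ fv B := by
  ext ⟨_ | n, x⟩ <;> cases c <;> simp [conn, fvo, fvs]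

theorem fv_quant (q : Quantifier) (k : Option ℕ) (x : ℕ) (A : Fm2 F) :
    fv (quant q k x A) = (fv A).erase (k, x) := by
  ext ⟨_ | n, z⟩ <;> cases q <;> cases k <;> simp [quant, fvo, fvs]

/-- All variables occurring in a formula, free or bound. -/
def occ : Fm2 F → Finset Var :=
  Fm2.uniformRec ∅ (fun n X ts => fv (.rel n X ts)) (fun _ S T => S ∪ T)
    fun _ k x _ S => insert (k, x) S

theorem occ_conn (c : Connective) (A B : Fm2 F) : occ (conn c A B) = occ A ∪ occ B := by
  cases c <;> rfl

theorem occ_quant (q : Quantifier) (k : Option ℕ) (x : ℕ) (A : Fm2 F) :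
    occ (quant q k x A) = insert (k, x) (occ A) := by
  cases q <;> cases k <;> rfl

theorem fv_subset_occ (A : Fm2 F) : fv A ⊆ occ A := by
  induction A using Fm2.uniformInduction with
  | bot => exact Finset.Subset.refl _
  | rel n X ts => exact Finset.Subset.refl _
  | conn c A B hA hB => rw [fv_conn, occ_conn]; exact Finset.union_subset_union hA hB
  | quant q k x A hA =>
    rw [fv_quant, occ_quant]
    exact (Finset.erase_subset _ _).trans (hA.trans (Finset.subset_insert _ _))

/-- The names occurring in `S` that a fresh variable of sort `k` has to avoid. `rnSub` and `cSub`
pick a fresh second-order variable apart from the second-order variables of all arities. -/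
def names (k : Option ℕ) (S : Finset Var) : Finset ℕ :=
  (S.filter fun p => p.1.isSome = k.isSome).image Prod.snd

theorem mem_names {k : Option ℕ} {x : ℕ} {S : Finset Var} (h : (k, x) ∈ S) : x ∈ names k S :=
  Finset.mem_image.2 ⟨(k, x), Finset.mem_filter.2 ⟨h, rfl⟩, rfl⟩

/-- The name chosen for a variable of sort `k` that is to be fresh for `S`. -/
def freshFor (S : Finset Var) (k : Option ℕ) : ℕ := fresh (names k S)

theorem freshFor_notMem (S : Finset Var) (k : Option ℕ) : (k, freshFor S k) ∉ S :=
  fun h => fresh_notMem _ (mem_names h)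

/-! ### Renamings -/

/-- The sort-preserving map of variables that gives `p` the new name `e p`. -/
def act (e : Var → ℕ) (p : Var) : Var := (p.1, e p)

/-- The first-order substitution underlying a renaming. -/
def toSub (e : Var → ℕ) (x : ℕ) : Tm F := .var (e (none, x))

/-- The second-order part of a renaming. -/
def toRen (e : Var → ℕ) (n X : ℕ) : ℕ := e (some n, X)

theorem toSub_update_none (e : Var → ℕ) (x y : ℕ) :
    toSub (F := F) (Function.update e (none, x) y) = Function.update (toSub e) x (.var y) := by
  ext z; obtain rfl | hz := eq_or_ne z x <;> simp_all [toSub]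

theorem toSub_update_some (e : Var → ℕ) (n X Y : ℕ) :
    toSub (F := F) (Function.update e (some n, X) Y) = toSub e := by
  ext z; simp [toSub]

theorem toRen_update_none (e : Var → ℕ) (x y : ℕ) :
    toRen (Function.update e (none, x) y) = toRen e := by
  ext m Z; simp [toRen]

theorem toRen_update_some (e : Var → ℕ) (n X Y : ℕ) :
    toRen (Function.update e (some n, X) Y) = upd2 (toRen e) n X Y := by
  ext m Z; simp [toRen, upd2, Function.update_apply]

theorem names_union (k : Option ℕ) (S T : Finset Var) :
    names k (S ∪ T) = names k S ∪ names k T := by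
  simp only [names, Finset.filter_union, Finset.image_union]

theorem names_none_image_act (e : Var → ℕ) (A : Fm2 F) :
    names none ((fv A).image (act e)) = sImg (F := F) (toSub e) (fvo A) := by
  rw [show toSub e = fun x => (.var (e (none, x)) : Tm F) from rfl, sImg_var]
  ext y; simp [names, act]

theorem names_some_image_act (e : Var → ℕ) (n : ℕ) (A : Fm2 F) :
    names (some n) ((fv A).image (act e)) = (fvs A).image fun p => toRen e p.1 p.2 := by
  ext y; simp [names, act, toRen, Option.exists]

theorem names_none_fv (A : Fm2 F) : names none (fv A) = fvo A := by
  ext y; simp [names]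

theorem names_some_fv (n : ℕ) (A : Fm2 F) : names (some n) (fv A) = (fvs A).image Prod.snd := by
  ext y; simp [names, Option.exists]

/-- The name given to a binder of sort `k` in front of `A` by a substitution acting as `e` on the
variables of `A` and avoiding `S`. -/
def binderName (S : Finset Var) (e : Var → ℕ) (k : Option ℕ) (A : Fm2 F) : ℕ :=
  freshFor ((fv A).image (act e) ∪ S) k

theorem binderName_congr {S : Finset Var} {e e' : Var → ℕ} {k : Option ℕ} {A : Fm2 F}
    (h : ∀ p ∈ fv A, e p = e' p) : binderName S e k A = binderName S e' k A := by
  have himage : (fv A).image (act e) = (fv A).image (act e') :=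
    Finset.image_congr fun p hp => congrArg (Prod.mk p.1) (h p hp)
  rw [binderName, binderName, himage]

theorem act_ne_binderName {S : Finset Var} {e : Var → ℕ} {k : Option ℕ} {A : Fm2 F} {p : Var}
    (hp : p ∈ fv A) : act e p ≠ (k, binderName S e k A) := by
  intro h
  apply freshFor_notMem ((fv A).image (act e) ∪ S) k
  exact Finset.mem_union_left _ (h ▸ Finset.mem_image_of_mem (act e) hp)

/-- The capture-avoiding renaming of `A` along `e` that gives every binder a name apart from `S`
and from the images of the variables free in its scope. -/
def freshen (S : Finset Var) (e : Var → ℕ) (A : Fm2 F) : Fm2 F :=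
  A.uniformRec (α := (Var → ℕ) → Fm2 F) (fun _ => .bot)
    (fun n X ts e => .rel n (e (some n, X)) (substTs (toSub e) ts))
    (fun c f g e => conn c (f e) (g e))
    (fun q k x A f e =>
      quant q k (binderName S e k A) (f (Function.update e (k, x) (binderName S e k A)))) e

theorem freshen_conn (S : Finset Var) (e : Var → ℕ) (c : Connective) (A B : Fm2 F) :
    freshen S e (conn c A B) = conn c (freshen S e A) (freshen S e B) := by
  cases c <;> rfl

theorem freshen_quant (S : Finset Var) (e : Var → ℕ) (q : Quantifier) (k : Option ℕ) (x : ℕ)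
    (A : Fm2 F) : freshen S e (quant q k x A) =
      quant q k (binderName S e k A)
        (freshen S (Function.update e (k, x) (binderName S e k A)) A) := by
  cases q <;> cases k <;> rfl

theorem substTs_toSub_congr {e e' : Var → ℕ} {n X : ℕ} {ts : List (Tm F)}
    (h : ∀ p ∈ fv (.rel n X ts : Fm2 F), e p = e' p) :
    substTs (toSub e) ts = substTs (toSub e') ts :=
  substTs_congr ts fun x hx => congrArg Tm.var (h (none, x) (none_mem_fv.2 hx))

-- Agreement on the free variables is not enough: the name of a binder depends on the value of `e`
-- at the variable it binds.
theorem freshen_congr {S : Finset Var} {e e' : Var → ℕ} {A : Fm2 F}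
    (h : ∀ p ∈ occ A, e p = e' p) : freshen S e A = freshen S e' A := by
  induction A using Fm2.uniformInduction generalizing e e' with
  | bot => rfl
  | rel n X ts =>
    exact congrArg₂ (Fm2.rel n) (h _ (some_mem_fv.2 (Finset.mem_singleton_self _)))
      (substTs_toSub_congr h)
  | conn c A B hA hB =>
    rw [occ_conn] at h
    rw [freshen_conn, freshen_conn, hA fun p hp => h p (Finset.mem_union_left _ hp),
      hB fun p hp => h p (Finset.mem_union_right _ hp)]
  | quant q k x A hA =>
    rw [occ_quant] at h
    have hocc : ∀ p ∈ occ A, e p = e' p := fun p hp => h p (Finset.mem_insert_of_mem hp)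
    rw [freshen_quant, freshen_quant, binderName_congr fun p hp => hocc p (fv_subset_occ A hp)]
    refine congrArg _ (hA fun p hp => ?_)
    rw [Function.update_apply, Function.update_apply, hocc p hp]

/-! ### The substitutions `rnSub` and `cSub` -/

theorem rnSub_conn (σ : ℕ → Tm F) (ρ : ℕ → ℕ → ℕ) (c : Connective) (A B : Fm2 F) :
    rnSub σ ρ (conn c A B) = conn c (rnSub σ ρ A) (rnSub σ ρ B) := by
  cases c <;> rfl

theorem rnSub_quant (e : Var → ℕ) (q : Quantifier) (k : Option ℕ) (x : ℕ) (A : Fm2 F) :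
    rnSub (toSub e) (toRen e) (quant q k x A) =
      quant q k (binderName ∅ e k A)
        (rnSub (toSub (Function.update e (k, x) (binderName ∅ e k A)))
          (toRen (Function.update e (k, x) (binderName ∅ e k A))) A) := by
  cases q <;> cases k <;>
    simp only [quant, rnSub, binderName, freshFor, Finset.union_empty, names_none_image_act,
      names_some_image_act, toSub_update_none, toSub_update_some, toRen_update_none,
      toRen_update_some]

theorem rnSub_eq_freshen (e : Var → ℕ) (A : Fm2 F) :
    rnSub (toSub e) (toRen e) A = freshen ∅ e A := by
  induction A using Fm2.uniformInduction generalizing e with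
  | bot => rfl
  | rel n X ts => rfl
  | conn c A B hA hB => rw [rnSub_conn, freshen_conn, hA, hB]
  | quant q k x A hA => rw [rnSub_quant, freshen_quant, hA]

section cSub

variable (n V : ℕ) (ps : List ℕ) (H : Fm2 F)

theorem cSub_conn (σ : ℕ → Tm F) (ρ : ℕ → ℕ → ℕ) (c : Connective) (A B : Fm2 F) :
    cSub n V ps H σ ρ (conn c A B) = conn c (cSub n V ps H σ ρ A) (cSub n V ps H σ ρ B) := by
  cases c <;> rfl

theorem cSub_quant (e : Var → ℕ) (q : Quantifier) (k : Option ℕ) (x : ℕ) (A : Fm2 F) :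
    cSub n V ps H (toSub e) (toRen e) (quant q k x A) =
      let e' := Function.update e (k, x) (binderName (fv H) e k A)
      quant q k (binderName (fv H) e k A)
        (if (k, x) = (some n, V) then freshen ∅ e' A
          else cSub n V ps H (toSub e') (toRen e') A) := by
  cases q <;> cases k <;>
    simp only [quant, cSub, binderName, freshFor, names_union, names_none_image_act,
      names_some_image_act, names_none_fv, names_some_fv, toSub_update_none, toSub_update_some,
      toRen_update_none, toRen_update_some, ← rnSub_eq_freshen, Prod.mk.injEq, Option.some.injEq,
      reduceCtorEq, false_and, if_false] <;>
    split_ifs <;> rfl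

theorem cSub_eq_freshen {A : Fm2 F} (hV : (some n, V) ∉ occ A) (e : Var → ℕ) :
    cSub n V ps H (toSub e) (toRen e) A = freshen (fv H) e A := by
  induction A using Fm2.uniformInduction generalizing e with
  | bot => rfl
  | rel m Y ts =>
    refine if_neg ?_
    rintro ⟨rfl, rfl⟩
    exact hV (some_mem_fv.2 (Finset.mem_singleton_self _))
  | conn c A B hA hB =>
    rw [occ_conn, Finset.notMem_union] at hV
    rw [cSub_conn, freshen_conn, hA hV.1, hB hV.2]
  | quant q k x A hA =>
    rw [occ_quant, Finset.mem_insert, not_or] at hV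
    simp only [cSub_quant, freshen_quant, if_neg (Ne.symm hV.1), hA hV.2]

end cSub

/-! ### Renaming bound variables -/

/-- The naive renaming of all variables of a formula along `e`, free and bound. -/
def ren (e : Var → ℕ) : Fm2 F → Fm2 F :=
  Fm2.uniformRec .bot (fun n X ts => .rel n (e (some n, X)) (substTs (toSub e) ts)) conn
    fun q k x _ B => quant q k (e (k, x)) B

theorem ren_conn (e : Var → ℕ) (c : Connective) (A B : Fm2 F) :
    ren e (conn c A B) = conn c (ren e A) (ren e B) := by
  cases c <;> rfl

theorem ren_quant (e : Var → ℕ) (q : Quantifier) (k : Option ℕ) (x : ℕ) (A : Fm2 F) :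
    ren e (quant q k x A) = quant q k (e (k, x)) (ren e A) := by
  cases q <;> cases k <;> rfl

theorem ren_snd (A : Fm2 F) : ren Prod.snd A = A := by
  induction A using Fm2.uniformInduction with
  | bot => rfl
  | rel n X ts => exact congrArg (Fm2.rel n X) (substTs_var ts)
  | conn c A B hA hB => rw [ren_conn, hA, hB]
  | quant q k x A hA => rw [ren_quant, hA]

theorem fv_rel_image (e : Var → ℕ) (n X : ℕ) (ts : List (Tm F)) :
    fv (.rel n (e (some n, X)) (substTs (toSub e) ts) : Fm2 F) =
      (fv (.rel n X ts : Fm2 F)).image (act e) := by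
  have hts : fvTs (substTs (toSub e) ts) = (fvTs ts).image fun x => e (none, x) :=
    fvTs_substTs_var _ ts
  ext ⟨_ | m, y⟩ <;> simp [fv, fvo, fvs, hts, act]

theorem fv_ren {e : Var → ℕ} (he : Function.Injective (act e)) (A : Fm2 F) :
    fv (ren e A) = (fv A).image (act e) := by
  induction A using Fm2.uniformInduction with
  | bot => rfl
  | rel n X ts => exact fv_rel_image e n X ts
  | conn c A B hA hB => rw [ren_conn, fv_conn, fv_conn, hA, hB, Finset.image_union]
  | quant q k x A hA => rw [ren_quant, fv_quant, fv_quant, hA, Finset.image_erase he]; rfl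

theorem freshen_ren {r : Var → ℕ} (hr : Function.Injective (act r)) (S : Finset Var)
    (e : Var → ℕ) (A : Fm2 F) : freshen S e (ren r A) = freshen S (e ∘ act r) A := by
  induction A using Fm2.uniformInduction generalizing e with
  | bot => rfl
  | rel n X ts => exact congrArg (Fm2.rel n _) (substTs_substTs _ _ ts)
  | conn c A B hA hB => rw [ren_conn, freshen_conn, freshen_conn, hA, hB]
  | quant q k x A hA =>
    have hname : binderName S e k (ren r A) = binderName S (e ∘ act r) k A := by
      rw [binderName, fv_ren hr, Finset.image_image]; rfl
    rw [ren_quant, freshen_quant, freshen_quant, hA, hname,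
      ← Function.update_comp_eq_of_injective _ hr]
    rfl

/-- The renaming that exchanges the names `x` and `w` of sort `k`. -/
def swapNames (k : Option ℕ) (x w : ℕ) (p : Var) : ℕ := (Equiv.swap (k, x) (k, w) p).2

theorem act_swapNames (k : Option ℕ) (x w : ℕ) :
    act (swapNames k x w) = Equiv.swap (k, x) (k, w) := by
  ext p : 1
  refine Prod.ext ?_ rfl
  simp only [act, Equiv.swap_apply_def]
  split_ifs with hx hw
  · rw [hx]
  · rw [hw]
  · rfl

theorem act_swapNames_injective (k : Option ℕ) (x w : ℕ) :
    Function.Injective (act (swapNames k x w)) :=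
  act_swapNames k x w ▸ (Equiv.swap _ _).injective

/-- The formula `quant q k x A` with the name of its outermost bound variable changed to `w`. -/
def rebind (q : Quantifier) (k : Option ℕ) (x w : ℕ) (A : Fm2 F) : Fm2 F :=
  quant q k w (ren (swapNames k x w) A)

theorem rebind_self (q : Quantifier) (k : Option ℕ) (x : ℕ) (A : Fm2 F) :
    rebind q k x x A = quant q k x A := by
  have hswap : swapNames k x x = Prod.snd := by
    funext p; rw [swapNames, Equiv.swap_self]; rfl
  rw [rebind, hswap, ren_snd]

section rebind

variable {k : Option ℕ} {x w : ℕ} {A : Fm2 F}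

theorem fv_rebind (hw : (k, w) ∈ occ A → w = x) (q : Quantifier) :
    fv (rebind q k x w A) = (fv A).erase (k, x) := by
  have hfix : ∀ p ∈ (fv A).erase (k, x), act (swapNames k x w) p = p := by
    intro p hp
    obtain ⟨hpx, hpA⟩ := Finset.mem_erase.1 hp
    rw [act_swapNames]
    refine Equiv.swap_apply_of_ne_of_ne hpx ?_
    rintro rfl
    exact hpx (hw (fv_subset_occ A hpA) ▸ rfl)
  have hx : act (swapNames k x w) (k, x) = (k, w) := by
    rw [act_swapNames, Equiv.swap_apply_left]
  rw [rebind, fv_quant, fv_ren (act_swapNames_injective k x w), ← hx,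
    ← Finset.image_erase (act_swapNames_injective k x w), Finset.image_congr hfix]
  exact Finset.image_id

theorem freshen_rebind (hw : (k, w) ∈ occ A → w = x) (q : Quantifier) (S : Finset Var)
    (e : Var → ℕ) : freshen S e (rebind q k x w A) =
      let y := binderName S (Function.update e (k, x) (e (k, w))) k A
      quant q k y (freshen S (Function.update e (k, x) y) A) := by
  have hswap : ∀ (e : Var → ℕ), ∀ p ∈ occ A,
      (e ∘ act (swapNames k x w)) p = Function.update e (k, x) (e (k, w)) p := by
    intro e p hp
    rw [Function.comp_apply, act_swapNames, Function.update_apply]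
    split_ifs with hpx
    · rw [hpx, Equiv.swap_apply_left]
    · rw [Equiv.swap_apply_of_ne_of_ne hpx]
      rintro rfl
      exact hpx (hw hp ▸ rfl)
  have hname : binderName S e k (ren (swapNames k x w) A) =
      binderName S (Function.update e (k, x) (e (k, w))) k A := by
    rw [binderName, fv_ren (act_swapNames_injective k x w), Finset.image_image]
    exact binderName_congr fun p hp => hswap e p (fv_subset_occ A hp)
  rw [rebind, freshen_quant, freshen_ren (act_swapNames_injective k x w), hname]
  refine congrArg _ (freshen_congr fun p hp => ?_)
  rw [hswap _ p hp, Function.update_self]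
  simp only [Function.update_apply]
  split_ifs with hpx hpw
  · rfl
  · exact absurd (hw (hpw ▸ hp) ▸ hpw) hpx
  · rfl

end rebind

/-! ### Linked formulas -/

/-- The free variables of the atom `N¹(N)`: a set which makes `freshen` choose binder names
above `N`. -/
def floor (N : ℕ) : Finset Var := {(none, N), (some 1, N)}

theorem names_floor (k : Option ℕ) (N : ℕ) : names k (floor N) = {N} := by
  cases k <;> rfl

/-- A family of renamings that is the identity on all names above some bound. -/
def EventuallyId (s : ℕ → Var → ℕ) : Prop := ∃ K, ∀ N p, K ≤ p.2 → s N p = p.2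

/-- `A` and `B` have the free variables `S` and become equal when freshened along some member of
the family `s`. -/
def Step (s : ℕ → Var → ℕ) (S : Finset Var) (A B : Fm2 F) : Prop :=
  fv A = S ∧ fv B = S ∧ ∃ N, freshen (floor N) (s N) A = freshen (floor N) (s N) B

/-- `A` and `B` are joined by steps, along every family of renamings that is eventually the
identity. This is α-equivalence; the quantification over all families makes it a congruence for
the quantifiers, since the scope of a binder is freshened along a modified family. -/
def Linked (A B : Fm2 F) : Prop :=
  fv A = fv B ∧ ∀ s, EventuallyId s → Relation.EqvGen (Step s (fv A)) A B

theorem eqvGen_map {α β : Type*} {r : α → α → Prop} {r' : β → β → Prop} {f : α → β}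
    (hf : ∀ a b, r a b → r' (f a) (f b)) {a b : α} (h : Relation.EqvGen r a b) :
    Relation.EqvGen r' (f a) (f b) := by
  induction h with
  | rel a b hab => exact .rel _ _ (hf a b hab)
  | refl a => exact .refl _
  | symm a b _ ih => exact .symm _ _ ih
  | trans a b c _ _ ihab ihbc => exact .trans _ _ _ ihab ihbc

namespace Linked

theorem refl (A : Fm2 F) : Linked A A := ⟨rfl, fun _ _ => .refl A⟩

theorem symm {A B : Fm2 F} (h : Linked A B) : Linked B A :=
  ⟨h.1.symm, fun s hs => h.1 ▸ (h.2 s hs).symm⟩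

theorem trans {A B C : Fm2 F} (hAB : Linked A B) (hBC : Linked B C) : Linked A C :=
  ⟨hAB.1.trans hBC.1, fun s hs => (hAB.2 s hs).trans _ _ _ (hAB.1 ▸ hBC.2 s hs)⟩

theorem conn_left {A A' : Fm2 F} (h : Linked A A') (c : Connective) (B : Fm2 F) :
    Linked (conn c A B) (conn c A' B) := by
  refine ⟨by rw [fv_conn, fv_conn, h.1], fun s hs =>
    eqvGen_map (f := (conn c · B)) (fun C D => ?_) (h.2 s hs)⟩
  rintro ⟨hC, hD, N, hN⟩
  refine ⟨by rw [fv_conn, fv_conn, hC], by rw [fv_conn, fv_conn, hD], N, ?_⟩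
  rw [freshen_conn, freshen_conn, hN]

theorem conn_right {B B' : Fm2 F} (h : Linked B B') (c : Connective) (A : Fm2 F) :
    Linked (conn c A B) (conn c A B') := by
  refine ⟨by rw [fv_conn, fv_conn, h.1], fun s hs =>
    eqvGen_map (f := (conn c A ·)) (fun C D => ?_) (h.2 s hs)⟩
  rintro ⟨hC, hD, N, hN⟩
  refine ⟨by rw [fv_conn, fv_conn, hC], by rw [fv_conn, fv_conn, hD], N, ?_⟩
  rw [freshen_conn, freshen_conn, hN]

theorem quant {A B : Fm2 F} (h : Linked A B) (q : Quantifier) (k : Option ℕ) (x : ℕ) :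
    Linked (quant q k x A) (quant q k x B) := by
  refine ⟨by rw [fv_quant, fv_quant, h.1], fun s ⟨K, hK⟩ => ?_⟩
  let y (N : ℕ) : ℕ := binderName (floor N) (s N) k A
  let s' (N : ℕ) : Var → ℕ := Function.update (s N) (k, x) (y N)
  have hs' : EventuallyId s' := by
    refine ⟨max K (x + 1), fun N p hp => ?_⟩
    have hpx : p ≠ (k, x) := by rintro rfl; simp at hp
    exact (Function.update_of_ne hpx _ _).trans (hK N p (le_of_max_le_left hp))
  refine eqvGen_map (fun C D => ?_) (h.2 s' hs')
  rintro ⟨hC, hD, N, hN⟩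
  have hy : ∀ E : Fm2 F, fv E = fv A → binderName (floor N) (s N) k E = y N := by
    intro E hE; simp only [y, binderName, hE]
  refine ⟨by rw [fv_quant, fv_quant, hC], by rw [fv_quant, fv_quant, hD], N, ?_⟩
  rw [freshen_quant, freshen_quant, hy C hC, hy D hD]
  exact congrArg _ hN

end Linked

theorem names_insert (k : Option ℕ) (x : ℕ) (S : Finset Var) :
    names k (insert (k, x) S) = insert x (names k S) := by
  simp only [names, Finset.filter_insert, if_true, Finset.image_insert]

theorem binderName_floor_update {N a b : ℕ} (hab : max a N = max b N) (e : Var → ℕ)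
    (k : Option ℕ) (x : ℕ) (A : Fm2 F) :
    binderName (floor N) (Function.update e (k, x) a) k A =
      binderName (floor N) (Function.update e (k, x) b) k A := by
  by_cases hx : (k, x) ∈ fv A
  · have hname : ∀ c, binderName (floor N) (Function.update e (k, x) c) k A =
        max (max c N) ((names k (((fv A).erase (k, x)).image (act e))).sup id) + 1 := by
      intro c
      have himage : ((fv A).erase (k, x)).image (act (Function.update e (k, x) c)) =
          ((fv A).erase (k, x)).image (act e) :=
        Finset.image_congr fun p hp => congrArg (Prod.mk p.1)
          (Function.update_of_ne (Finset.ne_of_mem_erase hp) _ _)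
      have hc : act (Function.update e (k, x) c) (k, x) = (k, c) :=
        congrArg (Prod.mk k) (Function.update_self _ _ _)
      rw [binderName, ← Finset.insert_erase hx, Finset.image_insert, himage, hc, freshFor,
        names_union, names_insert, names_floor, fresh, Finset.erase_insert_eq_erase]
      simp only [Finset.sup_union, Finset.sup_insert, Finset.sup_singleton, id, Finset.erase_idem]
      ac_rfl
    rw [hname, hname, hab]
  · refine binderName_congr fun p hp => ?_
    have hpx : p ≠ (k, x) := fun h => hx (h ▸ hp)
    rw [Function.update_of_ne hpx, Function.update_of_ne hpx]

theorem step_rebind {s : ℕ → Var → ℕ} {k : Option ℕ} {x w w' : ℕ} {A : Fm2 F}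
    (hw : (k, w) ∈ occ A → w = x) (hw' : (k, w') ∈ occ A → w' = x) (q : Quantifier) (N : ℕ)
    (hmax : max (s N (k, w)) N = max (s N (k, w')) N) :
    Step s ((fv A).erase (k, x)) (rebind q k x w A) (rebind q k x w' A) := by
  refine ⟨fv_rebind hw q, fv_rebind hw' q, N, ?_⟩
  rw [freshen_rebind hw, freshen_rebind hw', binderName_floor_update hmax]

-- With `N` large, `w` can be replaced by `max (s N (k, w)) N`, and any two names above `N` can be
-- interchanged by a step at a still larger floor.
theorem linked_rebind {k : Option ℕ} {x w w' : ℕ} {A : Fm2 F}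
    (hw : (k, w) ∈ occ A → w = x) (hw' : (k, w') ∈ occ A → w' = x) (q : Quantifier) :
    Linked (rebind q k x w A) (rebind q k x w' A) := by
  refine ⟨by rw [fv_rebind hw, fv_rebind hw'], fun s ⟨K, hK⟩ => ?_⟩
  rw [fv_rebind hw]
  let N := max K (fresh (names k (occ A)))
  have hstable : ∀ M u, N ≤ u → s M (k, u) = u := fun M u hu =>
    hK M (k, u) ((le_max_left K _).trans hu)
  have hfresh : ∀ u, N ≤ u → (k, u) ∈ occ A → u = x := by
    intro u hu h
    exact absurd ((lt_fresh (mem_names h)).trans_le ((le_max_right K _).trans hu)) (lt_irrefl u)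
  have hraise : ∀ v, ((k, v) ∈ occ A → v = x) → Step s ((fv A).erase (k, x)) (rebind q k x v A)
      (rebind q k x (max (s N (k, v)) N) A) := by
    intro v hv
    refine step_rebind hv (hfresh _ (le_max_right _ _)) q N ?_
    rw [hstable N _ (le_max_right _ _), max_assoc, max_self]
  have hjoin : ∀ u u', N ≤ u → N ≤ u' →
      Step s ((fv A).erase (k, x)) (rebind q k x u A) (rebind q k x u' A) := by
    intro u u' hu hu'
    refine step_rebind (hfresh u hu) (hfresh u' hu') q (max u u') ?_
    rw [hstable _ u hu, hstable _ u' hu', max_eq_right (le_max_left u u'),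
      max_eq_right (le_max_right u u')]
  exact (Relation.EqvGen.rel _ _ (hraise w hw)).trans _ _ _
    ((Relation.EqvGen.rel _ _ (hjoin _ _ (le_max_right _ _) (le_max_right _ _))).trans _ _ _
      (Relation.EqvGen.rel _ _ (hraise w' hw')).symm)

theorem linked_quant_rebind {k : Option ℕ} {u : ℕ} {A : Fm2 F} (hu : (k, u) ∉ occ A)
    (q : Quantifier) (x : ℕ) : Linked (quant q k x A) (rebind q k x u A) := by
  simpa only [rebind_self] using
    linked_rebind (w := x) (w' := u) (A := A) (fun _ => rfl) (fun h => absurd h hu) q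

/-! ### Linked formulas are interderivable -/

theorem iff_refl (b : Bool) (A : Fm2 F) : Prf2 b [] (iff2 A A) :=
  .conjI (.impI (.ax (List.mem_singleton_self A))) (.impI (.ax (List.mem_singleton_self A)))

theorem iff_symm {b : Bool} {A B : Fm2 F} (h : Prf2 b [] (iff2 A B)) : Prf2 b [] (iff2 B A) :=
  .conjI (.conjE2 h) (.conjE1 h)

theorem imp_trans {b : Bool} {A B C : Fm2 F} (hAB : Prf2 b [] (.imp A B))
    (hBC : Prf2 b [] (.imp B C)) : Prf2 b [] (.imp A C) := by
  have hsyll : Prf2 b [] (.imp (.imp A B) (.imp (.imp B C) (.imp A C))) :=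
    .impI (.impI (.impI (.impE (.ax (by simp)) (.impE (B := B) (A := A) (.ax (by simp))
      (.ax (by simp))))))
  exact .impE (.impE hsyll hAB) hBC

theorem iff_trans {b : Bool} {A B C : Fm2 F} (hAB : Prf2 b [] (iff2 A B))
    (hBC : Prf2 b [] (iff2 B C)) : Prf2 b [] (iff2 A C) :=
  .conjI (imp_trans (.conjE1 hAB) (.conjE1 hBC)) (imp_trans (.conjE2 hBC) (.conjE2 hAB))

theorem imp_of_prf {b : Bool} {A B : Fm2 F} (hB : Prf2 b [] B) : Prf2 b [] (.imp A B) :=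
  .impE (.impI (.impI (.ax (by simp)))) hB

theorem iff_of_prf {b : Bool} {A B : Fm2 F} (hA : Prf2 b [] A) (hB : Prf2 b [] B) :
    Prf2 b [] (iff2 A B) :=
  .conjI (imp_of_prf hB) (imp_of_prf hA)

theorem substS_eq_freshen_floor {V : ℕ} {A : Fm2 F} (hV : (some 0, V) ∉ occ A) (N : ℕ) :
    substS 0 V [] (.rel 1 N [.var N]) A = freshen (floor N) Prod.snd A :=
  cSub_eq_freshen 0 V [] (.rel 1 N [.var N]) hV Prod.snd

-- Substituting an arbitrary formula for a propositional variable `V⁰` that does not occur in `A`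
-- leaves `A` unchanged up to the names of its binders, which depend on the substituted formula.
theorem iff_freshen (b : Bool) (N : ℕ) (A : Fm2 F) :
    Prf2 b [] (iff2 A (freshen (floor N) Prod.snd A)) := by
  let A' := freshen (floor N) Prod.snd A
  let V := freshFor (occ A ∪ fv A') (some 0)
  obtain ⟨hVocc, hVA'⟩ := Finset.notMem_union.1 (freshFor_notMem (occ A ∪ fv A') (some 0))
  have hVA : (0, V) ∉ fvs A := fun h => hVocc (fv_subset_occ A (some_mem_fv.2 h))
  refine .conjI (.impI ?_) (.impI ?_)
  · have hall : Prf2 b [A] (.all2 0 V A) := .all2I (.ax (by simp)) (by simpa using hVA)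
    exact substS_eq_freshen_floor hVocc N ▸ hall.all2E [] (.rel 1 N [.var N]) rfl List.nodup_nil
  · have hex : Prf2 b [A'] (.ex2 0 V A) :=
      .ex2I [] (.rel 1 N [.var N]) rfl List.nodup_nil
        (substS_eq_freshen_floor hVocc N ▸ .ax (by simp [A']))
    exact hex.ex2E (.ax (by simp)) hVA (by simpa using hVA')

theorem iff_of_eqvGen_step {S : Finset Var} {A B : Fm2 F}
    (h : Relation.EqvGen (Step (fun _ => Prod.snd) S) A B) (b : Bool) :
    Prf2 b [] (iff2 A B) := by
  induction h with
  | rel A B hAB =>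
    obtain ⟨-, -, N, hN⟩ := hAB
    exact iff_trans (iff_freshen b N A) (hN ▸ iff_symm (iff_freshen b N B))
  | refl A => exact iff_refl b A
  | symm A B _ ih => exact iff_symm ih
  | trans A B C _ _ hAB hBC => exact iff_trans hAB hBC

theorem Linked.iff {A B : Fm2 F} (h : Linked A B) (b : Bool) : Prf2 b [] (iff2 A B) :=
  iff_of_eqvGen_step (h.2 (fun _ => Prod.snd) ⟨0, fun _ _ _ => rfl⟩) b

/-! ### Two renamings of a formula are linked -/

/-- `Renames e A B`: the formula `B` arises from `A` by renaming the free variables along `e` and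
the bound variables arbitrarily, without capture. -/
def Renames (e : Var → ℕ) (A B : Fm2 F) : Prop :=
  A.uniformRec (α := (Var → ℕ) → Fm2 F → Prop) (fun _ B => B = .bot)
    (fun n X ts e B => B = .rel n (e (some n, X)) (substTs (toSub e) ts))
    (fun c P Q e B => ∃ B₁ B₂, B = conn c B₁ B₂ ∧ P e B₁ ∧ Q e B₂)
    (fun q k x A P e B => ∃ y C, B = quant q k y C ∧
      (∀ p ∈ (fv A).erase (k, x), act e p ≠ (k, y)) ∧ P (Function.update e (k, x) y) C) e B

theorem renames_conn {e : Var → ℕ} {c : Connective} {A₁ A₂ B : Fm2 F} :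
    Renames e (conn c A₁ A₂) B ↔
      ∃ B₁ B₂, B = conn c B₁ B₂ ∧ Renames e A₁ B₁ ∧ Renames e A₂ B₂ := by
  cases c <;> rfl

theorem renames_quant {e : Var → ℕ} {q : Quantifier} {k : Option ℕ} {x : ℕ} {A B : Fm2 F} :
    Renames e (quant q k x A) B ↔ ∃ y C, B = quant q k y C ∧
      (∀ p ∈ (fv A).erase (k, x), act e p ≠ (k, y)) ∧
        Renames (Function.update e (k, x) y) A C := by
  cases q <;> cases k <;> rfl

theorem renames_freshen (S : Finset Var) (e : Var → ℕ) (A : Fm2 F) :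
    Renames e A (freshen S e A) := by
  induction A using Fm2.uniformInduction generalizing e with
  | bot => rfl
  | rel n X ts => rfl
  | conn c A B hA hB => exact renames_conn.2 ⟨_, _, freshen_conn S e c A B, hA e, hB e⟩
  | quant q k x A hA =>
    exact renames_quant.2 ⟨_, _, freshen_quant S e q k x A,
      fun p hp => act_ne_binderName (Finset.mem_of_mem_erase hp), hA _⟩

theorem renames_rnSub (e : Var → ℕ) (A : Fm2 F) : Renames e A (rnSub (toSub e) (toRen e) A) :=
  rnSub_eq_freshen e A ▸ renames_freshen ∅ e A

theorem renames_cSub {n V : ℕ} {A : Fm2 F} (hV : (n, V) ∉ fvs A) (ps : List ℕ) (H : Fm2 F)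
    (e : Var → ℕ) : Renames e A (cSub n V ps H (toSub e) (toRen e) A) := by
  rw [← some_mem_fv] at hV
  induction A using Fm2.uniformInduction generalizing e with
  | bot => rfl
  | rel m Y ts =>
    refine if_neg ?_
    rintro ⟨rfl, rfl⟩
    exact hV (some_mem_fv.2 (Finset.mem_singleton_self _))
  | conn c A B hA hB =>
    rw [fv_conn, Finset.notMem_union] at hV
    exact renames_conn.2 ⟨_, _, cSub_conn .., hA hV.1 e, hB hV.2 e⟩
  | quant q k x A hA =>
    refine renames_quant.2 ⟨_, _, cSub_quant .., fun p hp =>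
      act_ne_binderName (Finset.mem_of_mem_erase hp), ?_⟩
    split_ifs with hbound
    · exact renames_freshen ∅ _ A
    · rw [fv_quant] at hV
      exact hA (fun h => hV (Finset.mem_erase.2 ⟨Ne.symm hbound, h⟩)) _

theorem Renames.fv_eq {e : Var → ℕ} {A B : Fm2 F} (h : Renames e A B) :
    fv B = (fv A).image (act e) := by
  induction A using Fm2.uniformInduction generalizing e B with
  | bot => rw [show B = .bot from h]; rfl
  | rel n X ts => rw [show B = _ from h, fv_rel_image]
  | conn c A₁ A₂ h₁ h₂ =>
    obtain ⟨B₁, B₂, rfl, hB₁, hB₂⟩ := renames_conn.1 h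
    rw [fv_conn, fv_conn, h₁ hB₁, h₂ hB₂, Finset.image_union]
  | quant q k x A hA =>
    obtain ⟨y, C, rfl, hy, hC⟩ := renames_quant.1 h
    have himage : ((fv A).erase (k, x)).image (act (Function.update e (k, x) y)) =
        ((fv A).erase (k, x)).image (act e) :=
      Finset.image_congr fun p hp => congrArg (Prod.mk p.1)
        (Function.update_of_ne (Finset.ne_of_mem_erase hp) _ _)
    have hxy : act (Function.update e (k, x) y) (k, x) = (k, y) :=
      congrArg (Prod.mk k) (Function.update_self _ _ _)
    have hnotMem : (k, y) ∉ ((fv A).erase (k, x)).image (act e) := fun hmem =>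
      let ⟨p, hp, hpy⟩ := Finset.mem_image.1 hmem
      hy p hp hpy
    rw [fv_quant, fv_quant, hA hC, ← himage]
    rw [← himage] at hnotMem
    by_cases hx : (k, x) ∈ fv A
    · conv_lhs => rw [← Finset.insert_erase hx]
      rw [Finset.image_insert, hxy, Finset.erase_insert hnotMem]
    · rw [Finset.erase_eq_of_notMem hx] at hnotMem ⊢
      exact Finset.erase_eq_of_notMem hnotMem

theorem Renames.comp_ren {e r : Var → ℕ} {A B : Fm2 F} (h : Renames e A B)
    (hr : Function.Injective (act r)) : Renames (r ∘ act e) A (ren r B) := by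
  induction A using Fm2.uniformInduction generalizing e B with
  | bot => rw [show B = .bot from h]; rfl
  | rel n X ts =>
    rw [show B = _ from h]
    exact congrArg (Fm2.rel n _) (substTs_substTs _ _ ts)
  | conn c A₁ A₂ h₁ h₂ =>
    obtain ⟨B₁, B₂, rfl, hB₁, hB₂⟩ := renames_conn.1 h
    exact renames_conn.2 ⟨_, _, ren_conn .., h₁ hB₁, h₂ hB₂⟩
  | quant q k x A hA =>
    obtain ⟨y, C, rfl, hy, hC⟩ := renames_quant.1 h
    refine renames_quant.2 ⟨_, _, ren_quant .., fun p hp hpy => hy p hp (hr hpy), ?_⟩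
    have hupdate : Function.update (r ∘ act e) (k, x) (r (k, y)) =
        r ∘ act (Function.update e (k, x) y) := by
      funext p
      rw [Function.comp_apply, act, Function.update_apply, Function.update_apply]
      split_ifs with hp
      · rw [hp]
      · rfl
    exact hupdate ▸ hA hC

theorem Renames.exists_linked_quant {q : Quantifier} {k : Option ℕ} {x : ℕ} {A B : Fm2 F}
    {e : Var → ℕ} (h : Renames e (quant q k x A) B) :
    ∃ S : Finset Var, ∀ u, (k, u) ∉ S → ∃ C e',
      (∀ p ∈ fv A, e' p = Function.update e (k, x) u p) ∧ Renames e' A C ∧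
        Linked B (quant q k u C) := by
  obtain ⟨y, C, rfl, hy, hC⟩ := renames_quant.1 h
  refine ⟨occ C, fun u hu => ⟨ren (swapNames k y u) C, _, fun p hp => ?_,
    hC.comp_ren (act_swapNames_injective k y u), linked_quant_rebind hu q y⟩⟩
  obtain rfl | hpx := eq_or_ne p (k, x)
  · simp only [Function.comp_apply, act, Function.update_self, swapNames, Equiv.swap_apply_left]
  · have hact : act (Function.update e (k, x) y) p = act e p :=
      congrArg (Prod.mk p.1) (Function.update_of_ne hpx _ _)
    have hpy : act e p ≠ (k, y) := hy p (Finset.mem_erase.2 ⟨hpx, hp⟩)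
    have hpC : act e p ∈ occ C :=
      fv_subset_occ C (hC.fv_eq ▸ hact ▸ Finset.mem_image_of_mem _ hp)
    have hpu : act e p ≠ (k, u) := fun h => hu (h ▸ hpC)
    rw [Function.comp_apply, hact, swapNames, Equiv.swap_apply_of_ne_of_ne hpy hpu,
      Function.update_of_ne hpx]
    rfl

theorem Renames.linked {e e' : Var → ℕ} {A B C : Fm2 F} (hB : Renames e A B)
    (hC : Renames e' A C) (hee' : ∀ p ∈ fv A, e p = e' p) : Linked B C := by
  induction A using Fm2.uniformInduction generalizing e e' B C with
  | bot => rw [show B = .bot from hB, show C = .bot from hC]; exact .refl _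
  | rel n X ts =>
    have hX : e (some n, X) = e' (some n, X) :=
      hee' _ (some_mem_fv.2 (Finset.mem_singleton_self _))
    rw [show B = _ from hB, show C = _ from hC, hX, substTs_toSub_congr hee']
    exact .refl _
  | conn c A₁ A₂ h₁ h₂ =>
    obtain ⟨B₁, B₂, rfl, hB₁, hB₂⟩ := renames_conn.1 hB
    obtain ⟨C₁, C₂, rfl, hC₁, hC₂⟩ := renames_conn.1 hC
    rw [fv_conn] at hee'
    have hlink₁ := h₁ hB₁ hC₁ fun p hp => hee' p (Finset.mem_union_left _ hp)
    have hlink₂ := h₂ hB₂ hC₂ fun p hp => hee' p (Finset.mem_union_right _ hp)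
    exact (hlink₁.conn_left c B₂).trans (hlink₂.conn_right c C₁)
  | quant q k x A hA =>
    obtain ⟨S, hS⟩ := hB.exists_linked_quant
    obtain ⟨T, hT⟩ := hC.exists_linked_quant
    obtain ⟨huS, huT⟩ := Finset.notMem_union.1 (freshFor_notMem (S ∪ T) k)
    obtain ⟨B', f, hf, hB', hlinkB⟩ := hS _ huS
    obtain ⟨C', f', hf', hC', hlinkC⟩ := hT _ huT
    have hff' : ∀ p ∈ fv A, f p = f' p := by
      intro p hp
      rw [hf p hp, hf' p hp, Function.update_apply, Function.update_apply]
      split_ifs with hpx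
      · rfl
      · exact hee' p (fv_quant q k x A ▸ Finset.mem_erase.2 ⟨hpx, hp⟩)
    exact hlinkB.trans (((hA hB' hC' hff').quant q k _).trans hlinkC.symm)

/-! ### Comprehension is provable -/

/-- The universal quantification of `B` over the first-order variables `xs`. -/
def alls (xs : List ℕ) (B : Fm2 F) : Fm2 F := xs.foldr Fm2.all1 B

theorem alls_cons (x : ℕ) (xs : List ℕ) (B : Fm2 F) :
    alls (x :: xs) B = quant .all none x (alls xs B) :=
  rfl

theorem prf_cSub_alls {n X : ℕ} {G : Fm2 F} (hX : (n, X) ∉ fvs G) (b : Bool) {ps vs : List ℕ}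
    (hvs : vs ⊆ ps) {e : Var → ℕ} (hfst : ∀ x ∉ ps, e (none, x) = x) (hsnd : toRen e = ρid) :
    Prf2 b [] (cSub n X ps G (toSub e) (toRen e) (alls vs (iff2 G (.rel n X (ps.map .var))))) := by
  induction vs generalizing e with
  | nil =>
    have hmkσ : mkσ ps (substTs (toSub e) (ps.map .var)) = toSub (F := F) e := by
      funext z
      rw [substTs_map_var, mkσ_map]
      split_ifs with hz
      · rfl
      · exact congrArg Tm.var (hfst z hz).symm
    have hrel : cSub n X ps G (toSub e) (toRen e) (.rel n X (ps.map .var)) =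
        rnSub (toSub e) (toRen e) G := by
      rw [cSub, if_pos ⟨rfl, rfl⟩, hmkσ, hsnd]
    have hlinked : Linked (cSub n X ps G (toSub e) (toRen e) G)
        (cSub n X ps G (toSub e) (toRen e) (.rel n X (ps.map .var))) :=
      hrel ▸ (renames_cSub hX ps G e).linked (renames_rnSub e G) fun _ _ => rfl
    exact hlinked.iff b
  | cons v vs ih =>
    obtain ⟨hv, hvs⟩ := List.cons_subset.1 hvs
    simp only [alls_cons, cSub_quant, Prod.mk.injEq, reduceCtorEq, false_and, if_false]
    refine .all1I (ih hvs (fun x hx => ?_) ?_) (by simp)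
    · rw [Function.update_of_ne, hfst x hx]
      rintro ⟨⟩
      exact hx hv
    · rw [toRen_update_none, hsnd]

theorem prf_comprehension {n X : ℕ} {G : Fm2 F} (hX : (n, X) ∉ fvs G) (b : Bool) {xs : List ℕ}
    (hlen : xs.length = n) (hxs : xs.Nodup) :
    Prf2 b [] (.ex2 n X (alls xs (iff2 G (.rel n X (xs.map .var))))) :=
  .ex2I xs G hlen hxs
    (prf_cSub_alls hX b (List.Subset.refl xs) (e := Prod.snd) (fun _ _ => rfl) rfl)

/-! ### Instances of comprehension up to renaming -/

/-- `CompBody n X ws B`: the formula `B` has the form `∀x₁…∀xₘ (G ↔ Xⁿ(ws,x₁,…,xₘ))`, where the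
`n` arguments of `Xⁿ` are distinct variables and `Xⁿ` is not free in `G`. -/
inductive CompBody (n X : ℕ) : List ℕ → Fm2 F → Prop
  | iff {ws G} : ws.length = n → ws.Nodup → (n, X) ∉ fvs G →
      CompBody n X ws (iff2 G (.rel n X (ws.map .var)))
  | all1 {ws x B} : CompBody n X (ws ++ [x]) B → CompBody n X ws (.all1 x B)

namespace CompBody

variable {n X : ℕ} {ws : List ℕ} {B : Fm2 F}

theorem of_alls {xs : List ℕ} {G : Fm2 F} (hlen : (ws ++ xs).length = n)
    (hnodup : (ws ++ xs).Nodup) (hX : (n, X) ∉ fvs G) :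
    CompBody n X ws (alls xs (iff2 G (.rel n X ((ws ++ xs).map .var)))) := by
  induction xs generalizing ws with
  | nil => rw [List.append_nil] at *; exact .iff hlen hnodup hX
  | cons x xs ih =>
    rw [List.append_cons] at *
    exact .all1 (ih hlen hnodup)

theorem exists_eq_alls (h : CompBody n X ws B) : ∃ xs G, (ws ++ xs).length = n ∧
    (ws ++ xs).Nodup ∧ (n, X) ∉ fvs G ∧
      B = alls xs (iff2 G (.rel n X ((ws ++ xs).map .var))) := by
  induction h with
  | @iff ws G hlen hnodup hX =>
    refine ⟨[], G, ?_⟩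
    rw [List.append_nil]
    exact ⟨hlen, hnodup, hX, rfl⟩
  | @all1 ws x B _ ih =>
    obtain ⟨xs, G, hlen, hnodup, hX, rfl⟩ := ih
    rw [← List.append_cons] at *
    exact ⟨x :: xs, G, hlen, hnodup, hX, rfl⟩

theorem prf_ex2 (h : CompBody n X [] B) (b : Bool) : Prf2 b [] (.ex2 n X B) := by
  obtain ⟨xs, G, hlen, hnodup, hX, rfl⟩ := h.exists_eq_alls
  exact prf_comprehension hX b hlen hnodup

theorem nodup (h : CompBody n X ws B) : ws.Nodup := by
  obtain ⟨xs, G, -, hnodup, -⟩ := h.exists_eq_alls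
  exact hnodup.of_append_left

theorem mem_fvo (h : CompBody n X ws B) {w : ℕ} (hw : w ∈ ws) : w ∈ fvo B := by
  induction h with
  | iff => simp [iff2, fvo, fvTs_map_var, hw]
  | all1 hB ih =>
    refine Finset.mem_erase.2 ⟨?_, ih (List.mem_append_left _ hw)⟩
    rintro rfl
    exact (List.nodup_append.1 hB.nodup).2.2 _ hw _ (List.mem_singleton_self _) rfl

theorem mem_fvs (h : CompBody n X ws B) : (n, X) ∈ fvs B := by
  induction h with
  | iff => simp [iff2, fvs]
  | all1 _ ih => exact ih

theorem all1_map {x y : ℕ} {e : Var → ℕ} (hx : x ∉ ws)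
    (h : CompBody n X ((ws ++ [x]).map fun z => Function.update e (none, x) y (none, z)) B) :
    CompBody n X (ws.map fun z => e (none, z)) (.all1 y B) := by
  have hmap : (ws ++ [x]).map (fun z => Function.update e (none, x) y (none, z)) =
      ws.map (fun z => e (none, z)) ++ [y] := by
    rw [List.map_append, List.map_singleton, Function.update_self]
    refine congrArg (· ++ [y]) (List.map_congr_left fun w hw => Function.update_of_ne ?_ _ _)
    rintro ⟨⟩
    exact hx hw
  exact .all1 (hmap ▸ h)

theorem injOn_update {x y : ℕ} {e : Var → ℕ}
    (hinj : ∀ w ∈ ws, ∀ w' ∈ ws, e (none, w) = e (none, w') → w = w')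
    (hy : ∀ w ∈ ws, e (none, w) ≠ y) :
    ∀ w ∈ ws ++ [x], ∀ w' ∈ ws ++ [x], Function.update e (none, x) y (none, w) =
      Function.update e (none, x) y (none, w') → w = w' := by
  have hmem : ∀ w ∈ ws ++ [x], w ≠ x → w ∈ ws := by simp +contextual [or_iff_not_imp_right]
  intro w hw w' hw'
  simp only [Function.update_apply, Prod.mk.injEq, true_and]
  split_ifs with hwx hwx' hwx'
  · exact fun _ => hwx.trans hwx'.symm
  · exact fun h => absurd h.symm (hy w' (hmem w' hw' hwx'))
  · exact fun h => absurd h (hy w (hmem w hw hwx))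
  · exact hinj w (hmem w hw hwx) w' (hmem w' hw' hwx')

theorem rnSub {e : Var → ℕ} (h : CompBody n X ws B)
    (hinj : ∀ w ∈ ws, ∀ w' ∈ ws, e (none, w) = e (none, w') → w = w')
    (hX : ∀ Z, (n, Z) ∈ fvs B → e (some n, Z) = e (some n, X) → Z = X) :
    CompBody n (e (some n, X)) (ws.map fun w => e (none, w)) (rnSub (toSub e) (toRen e) B) := by
  induction h generalizing e with
  | @iff ws G hlen hnodup hXG =>
    have hrel : SOL.rnSub (toSub e) (toRen e) (.rel n X (ws.map .var) : Fm2 F) =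
        .rel n (e (some n, X)) ((ws.map fun w => e (none, w)).map .var) := by
      rw [List.map_map]
      exact congrArg (Fm2.rel n _) (substTs_map_var _ ws)
    have hnotMem : (n, e (some n, X)) ∉ fvs (SOL.rnSub (toSub e) (toRen e) G) := by
      rw [← some_mem_fv, (renames_rnSub e G).fv_eq, Finset.mem_image]
      rintro ⟨⟨k, Z⟩, hZ, heq⟩
      obtain ⟨rfl, hZX⟩ := Prod.mk.inj heq
      rw [some_mem_fv] at hZ
      exact hXG (hX Z (by simp [iff2, fvs, hZ]) hZX ▸ hZ)
    have hiff := CompBody.iff ((List.length_map _).trans hlen)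
      (hnodup.map_on hinj) hnotMem
    rwa [← hrel] at hiff
  | @all1 ws x B hB ih =>
    let y := binderName ∅ e none B
    have hy : ∀ w ∈ ws, e (none, w) ≠ y := fun w hw hwy =>
      act_ne_binderName (none_mem_fv.2 (hB.mem_fvo (List.mem_append_left _ hw)))
        (congrArg (Prod.mk none) hwy)
    have hx : x ∉ ws := fun hx =>
      (List.nodup_append.1 hB.nodup).2.2 x hx x (List.mem_singleton_self x) rfl
    have hscope := ih (e := Function.update e (none, x) y) (injOn_update hinj hy) hX
    rw [show Fm2.all1 x B = quant .all none x B from rfl, rnSub_quant]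
    exact all1_map hx hscope

theorem rnSub_update {Y : ℕ} {e : Var → ℕ} (h : CompBody n X [] B)
    (hY : ∀ Z, (n, Z) ∈ fvs B → e (some n, Z) ≠ Y) :
    let e' := Function.update e (some n, X) Y
    CompBody n Y [] (SOL.rnSub (toSub e') (toRen e') B) := by
  intro e'
  have hX : e' (some n, X) = Y := Function.update_self ..
  refine hX ▸ h.rnSub (by simp) fun Z hZ heq => by_contra fun hZX => hY Z hZ ?_
  have hne : ((some n, Z) : Var) ≠ (some n, X) := fun h => hZX (congrArg Prod.snd h)
  rw [← hX, ← heq]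
  exact (Function.update_of_ne hne _ _).symm

end CompBody

/-- The instances of the comprehension schema, up to the names of variables and without the
requirement that the quantifier prefix closes the formula. -/
inductive IsSC : Fm2 F → Prop
  | ex2 {n X B} : CompBody n X [] B → IsSC (.ex2 n X B)
  | all {A} (k x) : IsSC A → IsSC (quant .all k x A)

theorem isSC_of_mem_SC2 {A : Fm2 F} (h : A ∈ SC2) : IsSC A := by
  obtain ⟨n, X, xs, chis, G, hlen, hnodup, hX, -, -, rfl⟩ := h
  induction chis with
  | nil => exact .ex2 (CompBody.of_alls (ws := []) hlen hnodup hX)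
  | cons c chis ih =>
    obtain x | ⟨m, Y⟩ := c
    · exact .all none x ih
    · exact .all (some m) Y ih

theorem prf_quant_all {b : Bool} {A : Fm2 F} (h : Prf2 b [] A) (k : Option ℕ) (x : ℕ) :
    Prf2 b [] (quant .all k x A) := by
  cases k with
  | none => exact .all1I h (by simp)
  | some n => exact .all2I h (by simp)

namespace IsSC

theorem prf {A : Fm2 F} (h : IsSC A) (b : Bool) : Prf2 b [] A := by
  induction h with
  | ex2 hB => exact hB.prf_ex2 b
  | all k x _ ih => exact prf_quant_all ih k x

theorem rnSub {A : Fm2 F} (h : IsSC A) (e : Var → ℕ) :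
    IsSC (rnSub (toSub e) (toRen e) A) := by
  induction h generalizing e with
  | @ex2 n X B hB =>
    rw [show Fm2.ex2 n X B = quant .ex (some n) X B from rfl, rnSub_quant]
    exact .ex2 (hB.rnSub_update fun Z hZ hZY =>
      act_ne_binderName (some_mem_fv.2 hZ) (congrArg (Prod.mk (some n)) hZY))
  | all k x _ ih =>
    rw [rnSub_quant]
    exact .all k _ (ih _)

end IsSC

/-! ### Decoding the code of a formula -/

/-- The first-order quantification over `y`. -/
def quant1 {R : Type} : Quantifier → ℕ → Fm1 F R → Fm1 F R
  | .all => .all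
  | .ex => .ex

variable {φ ψ : ℕ → ℕ → ℕ}

/-- The variable of sort `k` with code `y`. -/
def decode (ψ : ℕ → ℕ → ℕ) : Option ℕ → ℕ → ℕ
  | none, y => y
  | some n, y => ψ n y

/-- The formula whose code is the scope of the quantifier in the code of `quant q k x A`. -/
def starScope (φ ψ : ℕ → ℕ → ℕ) (k : Option ℕ) (x : ℕ) (A : Fm2 F) : Fm2 F :=
  let e := Function.update Prod.snd (k, x) (decode ψ k (fresh (starFv φ A)))
  rnSub (toSub e) (toRen e) A

theorem star_quant (q : Quantifier) (k : Option ℕ) (x : ℕ) (A : Fm2 F) :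
    star φ ψ (quant q k x A) =
      quant1 q (fresh (starFv φ A)) (star φ ψ (starScope φ ψ k x A)) := by
  have hsub (y : ℕ) : (fun z => .var (Function.update id x y z) : ℕ → Tm F) =
      Function.update (toSub Prod.snd) x (.var y) := (update_var id x y).symm
  cases q <;> cases k <;>
    simp only [quant, star, starScope, decode, rename1, rename2, toSub_update_none,
      toSub_update_some, toRen_update_none, toRen_update_some, hsub] <;> rfl

theorem sz_conn (c : Connective) (A B : Fm2 F) : sz (conn c A B) = sz A + sz B + 1 := by
  cases c <;> rfl

theorem sz_quant (q : Quantifier) (k : Option ℕ) (x : ℕ) (A : Fm2 F) :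
    sz (quant q k x A) = sz A + 1 := by
  cases q <;> cases k <;> rfl

theorem sz_starScope (k : Option ℕ) (x : ℕ) (A : Fm2 F) :
    sz (starScope φ ψ k x A) = sz A :=
  sz_rnSub _ _ A

theorem rev_star_conn (c : Connective) (A B : Fm2 F) :
    rev φ ψ (star φ ψ (conn c A B)) = conn c (rev φ ψ (star φ ψ A)) (rev φ ψ (star φ ψ B)) := by
  cases c <;> simp only [conn, star, rev]

theorem rev_quant1 (q : Quantifier) (y : ℕ) (C : Fm1 F ℕ) :
    rev φ ψ (quant1 q y C) = quant q none y
      ((arities φ y (rev φ ψ C)).foldr (fun n => quant q (some n) (ψ n y)) (rev φ ψ C)) := by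
  cases q <;> rfl

theorem rev_star_rel (h : InvPair φ ψ) (n X : ℕ) (ts : List (Tm F)) :
    rev φ ψ (star φ ψ (.rel n X ts)) = .rel n X ts := by
  rw [star, rev, (h n).1 X]

theorem mem_arities (h : InvPair φ ψ) {n y : ℕ} {B : Fm2 F} :
    n ∈ arities φ y B ↔ (n, ψ n y) ∈ fvs B := by
  simp only [arities, Finset.mem_sort, Finset.mem_image, Finset.mem_filter, Prod.exists]
  constructor
  · rintro ⟨_, X, ⟨hX, rfl⟩, rfl⟩
    rwa [(h _).1 X]
  · exact fun hy => ⟨n, ψ n y, ⟨hy, (h n).2 y⟩, rfl⟩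

theorem mem_fv_foldr_quant (q : Quantifier) (Z : ℕ → ℕ) (ns : List ℕ) (B : Fm2 F) (p : Var) :
    p ∈ fv (ns.foldr (fun n => quant q (some n) (Z n)) B) ↔
      p ∈ fv B ∧ ∀ n ∈ ns, p ≠ (some n, Z n) := by
  induction ns with
  | nil => simp
  | cons n ns ih =>
    rw [List.foldr_cons, fv_quant, Finset.mem_erase, ih, List.forall_mem_cons]
    tauto

theorem mem_fvs_rev_quant1 (h : InvPair φ ψ) {q : Quantifier} {y n X : ℕ} {C : Fm1 F ℕ} :
    (n, X) ∈ fvs (rev φ ψ (quant1 q y C)) ↔ (n, X) ∈ fvs (rev φ ψ C) ∧ φ n X ≠ y := by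
  rw [← some_mem_fv, rev_quant1, fv_quant, Finset.mem_erase, mem_fv_foldr_quant, some_mem_fv]
  simp only [mem_arities h, ne_eq, Prod.mk.injEq, Option.some.injEq, reduceCtorEq, false_and,
    not_false_eq_true, true_and]
  refine and_congr_right fun hX => ⟨?_, ?_⟩
  · rintro hne rfl
    exact hne n (by rwa [(h n).1 X]) ⟨rfl, ((h n).1 X).symm⟩
  · rintro hne m - ⟨rfl, rfl⟩
    exact hne ((h n).2 y)

theorem ne_fresh_starFv {A : Fm2 F} {n X : ℕ} (hX : (n, X) ∈ fvs A) :
    φ n X ≠ fresh (starFv φ A) := fun heq =>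
  fresh_notMem (starFv φ A)
    (heq ▸ Finset.mem_union_right _ (Finset.mem_image_of_mem (fun p => φ p.1 p.2) hX))

theorem ne_decode_fresh (h : InvPair φ ψ) {A : Fm2 F} {n X : ℕ} (hX : (n, X) ∈ fvs A) :
    X ≠ ψ n (fresh (starFv φ A)) := by
  rintro rfl
  exact ne_fresh_starFv hX ((h n).2 _)

theorem mem_fvs_starScope {k : Option ℕ} {x n X : ℕ} {A : Fm2 F} :
    (n, X) ∈ fvs (starScope φ ψ k x A) ↔ (some n, X) ∈ (fv A).erase (k, x) ∨
      (k, x) ∈ fv A ∧ k = some n ∧ X = ψ n (fresh (starFv φ A)) := by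
  rw [← some_mem_fv, starScope, (renames_rnSub _ A).fv_eq, Finset.mem_image]
  constructor
  · rintro ⟨p, hp, heq⟩
    obtain rfl | hpx := eq_or_ne p (k, x)
    · rw [act, Function.update_self] at heq
      obtain ⟨rfl, rfl⟩ := Prod.mk.inj heq
      exact .inr ⟨hp, rfl, rfl⟩
    · rw [act, Function.update_of_ne hpx] at heq
      exact .inl (heq ▸ Finset.mem_erase.2 ⟨hpx, hp⟩)
  · rintro (hX | ⟨hx, rfl, rfl⟩)
    · obtain ⟨hne, hX⟩ := Finset.mem_erase.1 hX
      exact ⟨_, hX, by rw [act, Function.update_of_ne hne]⟩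
    · exact ⟨_, hx, by rw [act, Function.update_self]; rfl⟩

theorem scopeInduction {motive : Fm2 F → Prop} (φ ψ : ℕ → ℕ → ℕ) (bot : motive .bot)
    (rel : ∀ n X ts, motive (.rel n X ts))
    (conn : ∀ c A B, motive A → motive B → motive (conn c A B))
    (quant : ∀ q k x A, motive (starScope φ ψ k x A) → motive (quant q k x A)) (A : Fm2 F) :
    motive A := by
  induction hsz : sz A using Nat.strong_induction_on generalizing A with
  | h N ih =>
    subst hsz
    cases A using Fm2.uniformInduction with
    | bot => exact bot
    | rel n X ts => exact rel n X ts
    | conn c A B =>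
      exact conn c A B (ih _ (by rw [sz_conn]; omega) A rfl) (ih _ (by rw [sz_conn]; omega) B rfl)
    | quant q k x A =>
      exact quant q k x A (ih _ (by rw [sz_quant]; omega) _ (sz_starScope k x A))

theorem fvs_rev_star (h : InvPair φ ψ) (A : Fm2 F) : fvs (rev φ ψ (star φ ψ A)) = fvs A := by
  induction A using scopeInduction φ ψ with
  | bot => rw [star, rev]
  | rel n X ts => rw [rev_star_rel h]
  | conn c A B hA hB =>
    ext ⟨n, X⟩
    rw [rev_star_conn, ← some_mem_fv, ← some_mem_fv, fv_conn, fv_conn]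
    simp only [Finset.mem_union, some_mem_fv, hA, hB]
  | quant q k x A hA =>
    ext ⟨n, X⟩
    rw [star_quant, mem_fvs_rev_quant1 h, hA, mem_fvs_starScope, ← some_mem_fv, fv_quant]
    constructor
    · rintro ⟨hX | ⟨-, -, rfl⟩, hne⟩
      · exact hX
      · exact absurd ((h n).2 _) hne
    · exact fun hX => ⟨.inl hX, ne_fresh_starFv (some_mem_fv.1 (Finset.mem_of_mem_erase hX))⟩

theorem mem_arities_rev_star_starScope (h : InvPair φ ψ) {k : Option ℕ} {x n : ℕ} {A : Fm2 F} :
    n ∈ arities φ (fresh (starFv φ A)) (rev φ ψ (star φ ψ (starScope φ ψ k x A))) ↔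
      (k, x) ∈ fv A ∧ k = some n := by
  rw [mem_arities h, fvs_rev_star h, mem_fvs_starScope]
  refine ⟨?_, fun hx => .inr ⟨hx.1, hx.2, rfl⟩⟩
  rintro (hX | ⟨hx, hk, -⟩)
  · exact absurd rfl (ne_decode_fresh h (some_mem_fv.1 (Finset.mem_of_mem_erase hX)))
  · exact ⟨hx, hk⟩

theorem rev_star_quant_none (h : InvPair φ ψ) (q : Quantifier) (x : ℕ) (A : Fm2 F) :
    rev φ ψ (star φ ψ (quant q none x A)) =
      quant q none (fresh (starFv φ A)) (rev φ ψ (star φ ψ (starScope φ ψ none x A))) := by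
  have harities : arities φ (fresh (starFv φ A))
      (rev φ ψ (star φ ψ (starScope φ ψ none x A))) = [] :=
    List.eq_nil_iff_forall_not_mem.2 fun n hn => by
      simp [mem_arities_rev_star_starScope h] at hn
  rw [star_quant, rev_quant1, harities, List.foldr_nil]

theorem rev_star_quant_some (h : InvPair φ ψ) (q : Quantifier) {n X : ℕ} {A : Fm2 F}
    (hX : (n, X) ∈ fvs A) : rev φ ψ (star φ ψ (quant q (some n) X A)) =
      quant q none (fresh (starFv φ A)) (quant q (some n) (ψ n (fresh (starFv φ A)))
        (rev φ ψ (star φ ψ (starScope φ ψ (some n) X A)))) := by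
  have harities : arities φ (fresh (starFv φ A))
      (rev φ ψ (star φ ψ (starScope φ ψ (some n) X A))) = [n] := by
    rw [← List.perm_singleton, arities,
      List.perm_ext_iff_of_nodup (Finset.sort_nodup _ _) (List.nodup_singleton n)]
    intro m
    rw [← arities, mem_arities_rev_star_starScope h, List.mem_singleton, some_mem_fv,
      Option.some.injEq]
    exact (and_iff_right hX).trans eq_comm
  rw [star_quant, rev_quant1, harities, List.foldr_cons, List.foldr_nil]

/-! ### Decoded codes of instances of comprehension -/

theorem CompBody.rev_star (h : InvPair φ ψ) {n X : ℕ} {ws : List ℕ} {B : Fm2 F}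
    (hB : CompBody n X ws B) : CompBody n X ws (rev φ ψ (star φ ψ B)) := by
  induction hsz : sz B using Nat.strong_induction_on generalizing B ws with
  | h N ih =>
    subst hsz
    cases hB with
    | @iff ws G hlen hnodup hX =>
      have hiff : rev φ ψ (star φ ψ (iff2 G (.rel n X (ws.map .var)))) =
          iff2 (rev φ ψ (star φ ψ G)) (.rel n X (ws.map .var)) := by
        simp only [iff2, star, rev, (h n).1 X]
      exact hiff ▸ .iff hlen hnodup (by rwa [fvs_rev_star h])
    | @all1 ws x B hB =>
      let y := fresh (starFv φ B)
      have hy : ∀ w ∈ ws, w ≠ y := by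
        rintro w hw rfl
        exact fresh_notMem (starFv φ B)
          (Finset.mem_union_left _ (hB.mem_fvo (List.mem_append_left _ hw)))
      have hx : x ∉ ws := fun hx =>
        (List.nodup_append.1 hB.nodup).2.2 x hx x (List.mem_singleton_self x) rfl
      have hscope := hB.rnSub (injOn_update (e := Prod.snd) (fun _ _ _ _ => id) hy)
        fun _ _ => id
      have hrev := all1_map hx (ih _ (Nat.lt_succ_self _) hscope (sz_rnSub ..))
      rw [List.map_id'] at hrev
      exact (rev_star_quant_none h .all x B).symm ▸ hrev

theorem CompBody.starScope (h : InvPair φ ψ) {n X : ℕ} {B : Fm2 F} (hB : CompBody n X [] B) :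
    CompBody n (ψ n (fresh (starFv φ B))) [] (starScope φ ψ (some n) X B) :=
  hB.rnSub_update fun _ hZ => ne_decode_fresh h hZ

theorem IsSC.prf_rev_star (h : InvPair φ ψ) {A : Fm2 F} (hA : IsSC A) (b : Bool) :
    Prf2 b [] (rev φ ψ (star φ ψ A)) := by
  induction hsz : sz A using Nat.strong_induction_on generalizing A with
  | h N ih =>
    cases hA with
    | @ex2 n X B hB =>
      let y := fresh (starFv φ B)
      have hex := ((hB.starScope h).rev_star h).prf_ex2 b
      rw [show Fm2.ex2 n X B = quant .ex (some n) X B from rfl, rev_star_quant_some h _ hB.mem_fvs]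
      exact .ex1I (.var y) (.all1E (.var y) (.all1I hex (by simp)))
    | @all A k x hA =>
      have hscope : Prf2 b [] (rev φ ψ (star φ ψ (starScope φ ψ k x A))) :=
        ih _ (by rw [← hsz, sz_quant]; omega) (hA.rnSub _) (sz_starScope k x A)
      rw [star_quant, rev_quant1]
      refine prf_quant_all (List.foldrRecOn _ _ hscope fun B hB n _ => ?_) none _
      exact prf_quant_all hB (some n) _

end SOL

namespace SOL

/-- Every formula in the decoded set `(SC₁)ᵒ` is
intuitionistically second-order provably equivalent to a formula of `SC₂` and
conversely; in particular every formula of `(SC₁)ᵒ` is provable in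
second-order intuitionistic logic. -/
theorem revSC1_equiv_SC2 {F : Type} (φ ψ : ℕ → ℕ → ℕ) (h : InvPair φ ψ) :
    (∀ A ∈ rev φ ψ '' (SC1 (F := F) φ ψ), ∃ B ∈ (SC2 : Set (Fm2 F)),
        Prf2 false [] (iff2 A B)) ∧
    (∀ B ∈ (SC2 : Set (Fm2 F)), ∃ A ∈ rev φ ψ '' (SC1 (F := F) φ ψ),
        Prf2 false [] (iff2 A B)) ∧
    (∀ A ∈ rev φ ψ '' (SC1 (F := F) φ ψ), Prf2 false [] A) := by
  have key : ∀ C ∈ (SC2 : Set (Fm2 F)), Prf2 false [] (rev φ ψ (star φ ψ C)) := fun C hC =>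
    (isSC_of_mem_SC2 hC).prf_rev_star h false
  have hiff : ∀ C ∈ (SC2 : Set (Fm2 F)), Prf2 false [] (iff2 (rev φ ψ (star φ ψ C)) C) :=
    fun C hC => iff_of_prf (key C hC) ((isSC_of_mem_SC2 hC).prf false)
  refine ⟨?_, ?_, ?_⟩
  · rintro _ ⟨_, ⟨C, hC, rfl⟩, rfl⟩
    exact ⟨C, hC, hiff C hC⟩
  · intro C hC
    exact ⟨_, ⟨_, ⟨C, hC, rfl⟩, rfl⟩, hiff C hC⟩
  · rintro _ ⟨_, ⟨C, hC, rfl⟩, rfl⟩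
    exact key C hC

end SOL
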